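/- arXiv:1507.02942 — 3 statements merged into one kernel-verified Lean document; each statement's English description precedes it below -/
import Mathlib

section
/- For every prime p ≥ 5 and every positive integer C, there exists a finite p-group G that can be generated by two elements, with |G| > C, such that, writing exp G = p^e, one has |G^{p^{e-1}}| = p and G is a Beauville group. (Hence the 'only if' implication of the criterion 'G is Beauville iff p ≥ 5 and |G^{p^{e-1}}| ≥ p^2' fails for infinitely many 2-generator p-groups.) -/
open Subgroup

/-- `Σ(x,y)`: the union of all conjugates of the cyclic subgroups `⟨x⟩`, `⟨y⟩`, `⟨xy⟩`. -/
def SigmaSet {G : Type*} [Group G] (x y : G) : Set G :=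
  ⋃ g : G, ((zpowers (g * x * g⁻¹) : Set G) ∪ (zpowers (g * y * g⁻¹) : Set G) ∪
    (zpowers (g * (x * y) * g⁻¹) : Set G))

/-- An (unmixed) Beauville structure on `G`. -/
def IsBeauvilleStructure {G : Type*} [Group G] (x₁ y₁ x₂ y₂ : G) : Prop :=
  closure {x₁, y₁} = ⊤ ∧ closure {x₂, y₂} = ⊤ ∧
    SigmaSet x₁ y₁ ∩ SigmaSet x₂ y₂ = {1}

/-- `G` is a Beauville group if it admits a Beauville structure. -/
def IsBeauvilleGroup (G : Type*) [Group G] : Prop :=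
  ∃ x₁ y₁ x₂ y₂ : G, IsBeauvilleStructure x₁ y₁ x₂ y₂

/-- `G^n`: the subgroup generated by all `n`-th powers of elements of `G`. -/
def powSubgroup (G : Type*) [Group G] (n : ℕ) : Subgroup G :=
  closure (Set.range fun g : G => g ^ n)

/-!
Let `ζ` be a primitive `p`-th root of unity, `R = ℤ[ζ] / (ζ - 1) ^ n` with `n = (p - 1) C + 1`, and
let `G = R ⋊ ZMod p`, where `a` acts as multiplication by `ζ ^ a`. An element of `G` outside `R` has
`p`-th power `(1 + ζ ^ a + ⋯ + ζ ^ (a (p - 1))) r = 0`, so the exponent of `G` is the characteristic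
`p ^ (C + 1)` of `R`, and the `p ^ C`-th powers form the ideal `p ^ C R ≅ ℤ[ζ] / (ζ - 1)`, of order
`p`. Six elements of `G` lying over six distinct points of the projective line of the Frattini
quotient `ZMod p × ZMod p` can be arranged into two generating triples `x, y, xy`, one of which
avoids `R`. Its members have order `p`, so a nontrivial power of one of them is nontrivial in the
Frattini quotient, and hence is not conjugate to a power of a member of the other triple.
-/

section BeauvilleCriterion

variable {G : Type*} [Group G] {x y : G}

theorem mem_sigmaSet_iff {w : G} :
    w ∈ SigmaSet x y ↔ ∃ t ∈ ({x, y, x * y} : Set G), ∃ g, w ∈ zpowers (g * t * g⁻¹) := by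
  simp [SigmaSet, exists_or, or_assoc]

theorem one_mem_sigmaSet : (1 : G) ∈ SigmaSet x y :=
  mem_sigmaSet_iff.mpr ⟨x, by simp, 1, one_mem _⟩

theorem eq_one_of_mem_zpowers_conj {A : Type*} [CommGroup A] (π : G →* A) {p : ℕ}
    (hp : p.Prime) (hx : x ^ p = 1) (hπ : π x ∉ zpowers (π y)) {g h w : G}
    (hwx : w ∈ zpowers (g * x * g⁻¹)) (hwy : w ∈ zpowers (h * y * h⁻¹)) : w = 1 := by
  obtain ⟨k, rfl⟩ := mem_zpowers_iff.mp hwx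
  have hπw : π x ^ k ∈ zpowers (π y) := by simpa using mem_map_of_mem π hwy
  have hp_dvd : (p : ℤ) ∣ k := by
    by_contra hk
    obtain ⟨u, v, huv⟩ : IsCoprime (p : ℤ) k :=
      (Nat.prime_iff_prime_int.mp hp).coprime_iff_not_dvd.mpr hk
    refine hπ ?_
    have hπx : π x = (π x ^ k) ^ v :=
      calc π x = π x ^ (p * u + k * v) := by rw [mul_comm _ u, mul_comm k, huv, zpow_one]
        _ = (π x ^ k) ^ v := by
          rw [zpow_add, zpow_mul, zpow_mul, zpow_natCast, ← map_pow, hx, map_one, one_zpow, one_mul]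
    exact hπx ▸ zpow_mem hπw v
  obtain ⟨m, rfl⟩ := hp_dvd
  rw [conj_zpow, zpow_mul, zpow_natCast, hx, one_zpow, mul_one, mul_inv_cancel]

theorem isBeauvilleStructure_of_map_notMem_zpowers {A : Type*} [CommGroup A] (π : G →* A) {p : ℕ}
    (hp : p.Prime) {x₁ y₁ x₂ y₂ : G}
    (hgen₁ : closure {x₁, y₁} = ⊤) (hgen₂ : closure {x₂, y₂} = ⊤)
    (hpow : ∀ s ∈ ({x₁, y₁, x₁ * y₁} : Set G), s ^ p = 1)
    (hπ : ∀ s ∈ ({x₁, y₁, x₁ * y₁} : Set G), ∀ t ∈ ({x₂, y₂, x₂ * y₂} : Set G),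
      π s ∉ zpowers (π t)) :
    IsBeauvilleStructure x₁ y₁ x₂ y₂ := by
  refine ⟨hgen₁, hgen₂, Set.eq_singleton_iff_unique_mem.mpr
    ⟨⟨one_mem_sigmaSet, one_mem_sigmaSet⟩, ?_⟩⟩
  rintro w ⟨hw₁, hw₂⟩
  obtain ⟨s, hs, g, hws⟩ := mem_sigmaSet_iff.mp hw₁
  obtain ⟨t, ht, h, hwt⟩ := mem_sigmaSet_iff.mp hw₂
  exact eq_one_of_mem_zpowers_conj π hp (hpow s hs) (hπ s hs t ht) hws hwt

end BeauvilleCriterion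

section PowersOutsideSubgroup

variable {N G : Type*} [CommGroup N] [Group G] {f : N →* G} {m : ℕ}

theorem exponent_eq_of_pow_eq_one_of_notMem_range (hinj : Function.Injective f)
    (hf : ∀ g ∉ f.range, g ^ m = 1) (hm : m ∣ Monoid.exponent N) :
    Monoid.exponent G = Monoid.exponent N := by
  refine Nat.dvd_antisymm (Monoid.exponent_dvd_of_forall_pow_eq_one fun g => ?_)
    (Monoid.exponent_dvd_of_monoidHom f hinj)
  by_cases hg : g ∈ f.range
  · obtain ⟨n, rfl⟩ := hg
    rw [← map_pow, Monoid.pow_exponent_eq_one, map_one]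
  · obtain ⟨c, hc⟩ := hm
    rw [hc, pow_mul, hf g hg, one_pow]

theorem powSubgroup_eq_map_range_powMonoidHom
    (hf : ∀ g ∉ f.range, g ^ m = 1) {k : ℕ} (hm : m ∣ k) :
    powSubgroup G k = (powMonoidHom k : N →* N).range.map f := by
  refine le_antisymm ((closure_le _).mpr ?_) ?_
  · rintro _ ⟨g, rfl⟩
    by_cases hg : g ∈ f.range
    · obtain ⟨n, rfl⟩ := hg
      exact ⟨n ^ k, ⟨n, rfl⟩, map_pow f n k⟩
    · obtain ⟨c, rfl⟩ := hm
      simp only [pow_mul, hf g hg, one_pow, SetLike.mem_coe, one_mem]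
  · rintro _ ⟨_, ⟨n, rfl⟩, rfl⟩
    exact subset_closure ⟨f n, (map_pow f n k).symm⟩

end PowersOutsideSubgroup

section RingTheory

theorem ofAdd_notMem_zpowers_ofAdd_of_det_ne_zero {S : Type*} [CommRing S] {a b c d : S}
    (h : a * d - b * c ≠ 0) :
    Multiplicative.ofAdd (a, b) ∉ zpowers (Multiplicative.ofAdd (c, d)) := by
  intro hmem
  obtain ⟨k, hk⟩ := mem_zpowers_iff.mp hmem
  rw [← ofAdd_zsmul, Multiplicative.ofAdd.apply_eq_iff_eq, Prod.smul_mk, Prod.mk.injEq] at hk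
  obtain ⟨rfl, rfl⟩ := hk
  exact h (by simp only [zsmul_eq_mul]; ring)

theorem zmod_natCast_ne_zero_of_lt {m n : ℕ} (hm : m ≠ 0) (hmn : m < n) : (m : ZMod n) ≠ 0 :=
  (ZMod.natCast_eq_zero_iff m n).not.mpr (Nat.not_dvd_of_pos_of_lt (Nat.pos_of_ne_zero hm) hmn)

theorem mul_mem_of_adjoin_singleton_eq_top {R : Type*} [Ring R] {z : R}
    (hz : Algebra.adjoin ℤ {z} = ⊤) {S : AddSubgroup R} (hS : ∀ s ∈ S, z * s ∈ S) (r : R) :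
    ∀ s ∈ S, r * s ∈ S := by
  have hr : r ∈ Algebra.adjoin ℤ {z} := hz ▸ Algebra.mem_top
  induction hr using Algebra.adjoin_induction with
  | mem _ hx => rwa [Set.mem_singleton_iff.mp hx]
  | algebraMap n => exact fun s hs => by simpa using zsmul_mem hs n
  | add _ _ _ _ hx hy => exact fun s hs => add_mul _ _ s ▸ add_mem (hx s hs) (hy s hs)
  | mul _ _ _ _ hx hy => exact fun s hs => mul_assoc _ _ s ▸ hx _ (hy s hs)

theorem addMonoid_exponent_eq_of_charP (R : Type*) [NonAssocRing R] (n : ℕ) [CharP R n] :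
    AddMonoid.exponent R = n := by
  refine Nat.dvd_antisymm (AddMonoid.exponent_dvd_of_forall_nsmul_eq_zero fun r => ?_) ?_
  · rw [nsmul_eq_mul, CharP.cast_eq_zero, zero_mul]
  · rw [← CharP.cast_eq_zero_iff R, ← nsmul_one, AddMonoid.exponent_nsmul_eq_zero]

theorem isUnit_natCast_of_coprime_charP (R : Type*) [Ring R] {m n : ℕ} [CharP R n]
    (h : m.Coprime n) : IsUnit (m : R) := by
  simpa using ((ZMod.isUnit_iff_coprime m n).mpr h).map (ZMod.castHom dvd_rfl R)

theorem map_addChar_eq_one {p : ℕ} [Fact p.Prime] {R : Type*} [Semiring R]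
    (ψ : AddChar (ZMod p) R) (ε : R →+* ZMod p) (a : ZMod p) : ε (ψ a) = 1 := by
  rw [← ZMod.pow_card (ε (ψ a)), ← map_pow, ← AddChar.map_nsmul_eq_pow, nsmul_eq_mul,
    CharP.cast_eq_zero, zero_mul, AddChar.map_zero_eq_one, map_one]

theorem geom_sum_zmodChar_eq_zero {p : ℕ} [Fact p.Prime] {D : Type*} [CommRing D] [IsDomain D]
    {ζ : D} (hζ : IsPrimitiveRoot ζ p) {a : ZMod p} (ha : a ≠ 0) :
    ∑ m ∈ Finset.range p, AddChar.zmodChar p hζ.pow_eq_one a ^ m = 0 := by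
  have hcop : a.val.Coprime p := ZMod.val_coe_unit_coprime (Units.mk0 a ha)
  rw [AddChar.zmodChar_apply]
  exact (hζ.pow_of_coprime _ hcop).geom_sum_eq_zero (Fact.out : p.Prime).one_lt

end RingTheory

/-- The action of `A` on the additive group of `R` by multiplication by the values of an additive
character `ψ : A → R`, in the multiplicative notation required by `SemidirectProduct`. -/
def addCharMulAut {A R : Type*} [AddGroup A] [Ring R] (ψ : AddChar A R) :
    Multiplicative A →* MulAut (Multiplicative R) :=
  (MulAutMultiplicative R).symm.toMonoidHom.comp
    ((DistribMulAction.toAddAut Rˣ R).comp ψ.toMonoidHom.toHomUnits)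

/-- The semidirect product `R ⋊ A` in which `a : A` acts on the additive group of `R` as
multiplication by `ψ a`. For `R = ℤ[ζ] / (ζ - 1) ^ n` and `A = ZMod p` acting through the powers of
`ζ`, these are the groups that prove the theorem. -/
abbrev AddCharSemidirect {A R : Type*} [AddGroup A] [Ring R] (ψ : AddChar A R) : Type _ :=
  Multiplicative R ⋊[addCharMulAut ψ] Multiplicative A

namespace AddCharSemidirect

open Multiplicative

section General

variable {A R : Type*} [AddGroup A] [Ring R] (ψ : AddChar A R)

/-- The element of `R ⋊ A` with components `r` and `a`; it hides the `Multiplicative` type tags, so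
that computations in the group take place in `R` and `A`. -/
def pair (r : R) (a : A) : AddCharSemidirect ψ := ⟨ofAdd r, ofAdd a⟩

variable {ψ}

theorem exists_eq_pair (x : AddCharSemidirect ψ) : ∃ r a, x = pair ψ r a :=
  ⟨x.left.toAdd, x.right.toAdd, rfl⟩

theorem pair_mul_pair (r s : R) (a b : A) :
    pair ψ r a * pair ψ s b = pair ψ (r + ψ a * s) (a + b) := rfl

theorem pair_zero_zero : pair ψ 0 0 = 1 := rfl

theorem pair_pow (r : R) (a : A) (k : ℕ) :
    pair ψ r a ^ k = pair ψ ((∑ m ∈ Finset.range k, ψ a ^ m) * r) (k • a) := by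
  induction k with
  | zero => simp [pair_zero_zero]
  | succ k ih =>
    rw [pow_succ, ih, pair_mul_pair, AddChar.map_nsmul_eq_pow, Finset.sum_range_succ, add_mul,
      succ_nsmul]

theorem pair_pow_eq_one {r : R} {a : A} {k : ℕ} (hsum : ∑ m ∈ Finset.range k, ψ a ^ m = 0)
    (ha : k • a = 0) : pair ψ r a ^ k = 1 := by
  rw [pair_pow, hsum, ha, zero_mul, pair_zero_zero]

theorem pair_mem_of_conj {H : Subgroup (AddCharSemidirect ψ)} {t s : R} {a : A}
    (ht : pair ψ t a ∈ H) (hs : pair ψ s 0 ∈ H) : pair ψ (ψ a * s) 0 ∈ H := by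
  have hconj : pair ψ t a * pair ψ s 0 * (pair ψ t a)⁻¹ = pair ψ (ψ a * s) 0 := by
    rw [mul_inv_eq_iff_eq_mul, pair_mul_pair, pair_mul_pair, AddChar.map_zero_eq_one, one_mul,
      add_zero, zero_add, add_comm]
  exact hconj ▸ mul_mem (mul_mem ht hs) (inv_mem ht)

theorem eq_top_of_pair_mem {H : Subgroup (AddCharSemidirect ψ)} {a : A}
    (ha : AddSubgroup.zmultiples a = ⊤) (hψ : Algebra.adjoin ℤ {ψ a} = ⊤) {u t : R}
    (hu : IsUnit u) (hu_mem : pair ψ u 0 ∈ H) (ht_mem : pair ψ t a ∈ H) : H = ⊤ := by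
  have hker (r : R) : pair ψ r 0 ∈ H := by
    obtain ⟨v, hv⟩ := hu.exists_left_inv
    have hstable := mul_mem_of_adjoin_singleton_eq_top hψ
      (S := (H.comap SemidirectProduct.inl).toAddSubgroup')
      (fun s hs => pair_mem_of_conj ht_mem hs)
    rw [← mul_one r, ← hv, ← mul_assoc]
    exact hstable (r * v) u hu_mem
  refine (eq_top_iff' H).mpr fun x => ?_
  obtain ⟨r, b, rfl⟩ := exists_eq_pair x
  obtain ⟨k, rfl⟩ := AddSubgroup.mem_zmultiples_iff.mp (ha ▸ AddSubgroup.mem_top b)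
  obtain ⟨s, c, hsc⟩ := exists_eq_pair (pair ψ t a ^ k)
  have hc : c = k • a :=
    (congrArg SemidirectProduct.rightHom hsc).symm.trans (map_zpow SemidirectProduct.rightHom _ k)
  have hfactor : pair ψ r (k • a) = pair ψ (r - s) 0 * pair ψ t a ^ k := by
    rw [hsc, pair_mul_pair, AddChar.map_zero_eq_one, one_mul, sub_add_cancel, zero_add, hc]
  exact hfactor ▸ mul_mem (hker _) (zpow_mem ht_mem k)

theorem natCard (ψ : AddChar A R) :
    Nat.card (AddCharSemidirect ψ) = Nat.card R * Nat.card A := by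
  rw [SemidirectProduct.card, Nat.card_congr toAdd, Nat.card_congr toAdd]

/-- The abelian quotient `R ⋊ A → S × A` induced by a ring homomorphism `ε : R → S` that trivializes
the action. For `S = A = ZMod p` it serves as the quotient by the Frattini subgroup. -/
def toProd {S : Type*} [Semiring S] (ε : R →+* S) (hε : ∀ a, ε (ψ a) = 1) :
    AddCharSemidirect ψ →* Multiplicative (S × A) where
  toFun x := ofAdd (ε x.left.toAdd, x.right.toAdd)
  map_one' := by simp
  map_mul' x y := by
    obtain ⟨r, a, rfl⟩ := exists_eq_pair x
    obtain ⟨s, b, rfl⟩ := exists_eq_pair y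
    rw [pair_mul_pair]
    simp [pair, ← ofAdd_add, hε]

theorem toProd_pair {S : Type*} [Semiring S] (ε : R →+* S) (hε : ∀ a, ε (ψ a) = 1) (r : R) (a : A) :
    toProd ε hε (pair ψ r a) = ofAdd (ε r, a) := rfl

end General

section ZMod

variable {p : ℕ} {R : Type*} [Ring R] {ψ : AddChar (ZMod p) R}

theorem pow_eq_one_of_notMem_range_inl
    (hsum : ∀ a ≠ 0, ∑ m ∈ Finset.range p, ψ a ^ m = 0) (x : AddCharSemidirect ψ)
    (hx : x ∉ (SemidirectProduct.inl : Multiplicative R →* AddCharSemidirect ψ).range) :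
    x ^ p = 1 := by
  obtain ⟨r, a, rfl⟩ := exists_eq_pair x
  have ha : a ≠ 0 := by
    rintro rfl
    exact hx ⟨ofAdd r, rfl⟩
  exact pair_pow_eq_one (hsum a ha) (by simp)

theorem exponent_eq (hsum : ∀ a ≠ 0, ∑ m ∈ Finset.range p, ψ a ^ m = 0) {n : ℕ}
    [CharP R n] (hn : p ∣ n) : Monoid.exponent (AddCharSemidirect ψ) = n := by
  have hexp : Monoid.exponent (Multiplicative R) = n :=
    Monoid.exponent_multiplicative.trans (addMonoid_exponent_eq_of_charP R n)
  rw [exponent_eq_of_pow_eq_one_of_notMem_range SemidirectProduct.inl_injective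
    (pow_eq_one_of_notMem_range_inl hsum) (hexp ▸ hn), hexp]

theorem card_powSubgroup (hsum : ∀ a ≠ 0, ∑ m ∈ Finset.range p, ψ a ^ m = 0) {k : ℕ}
    (hk : p ∣ k) :
    Nat.card (powSubgroup (AddCharSemidirect ψ) k) = Nat.card (Ideal.span {(k : R)}) := by
  have hmap : powSubgroup (AddCharSemidirect ψ) k =
      (powMonoidHom k : Multiplicative R →* Multiplicative R).range.map SemidirectProduct.inl :=
    powSubgroup_eq_map_range_powMonoidHom (f := SemidirectProduct.inl)
      (pow_eq_one_of_notMem_range_inl hsum) hk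
  rw [hmap, card_map_of_injective SemidirectProduct.inl_injective]
  refine Nat.card_congr (Equiv.subtypeEquiv toAdd fun r => ?_)
  rw [Ideal.mem_span_singleton']
  refine exists_congr fun s => ?_
  rw [powMonoidHom_apply, ← toAdd.apply_eq_iff_eq, toAdd_pow, nsmul_eq_mul, Nat.cast_comm]
  rfl

variable [Fact p.Prime]

theorem closure_pair_eq_top (hψ : Algebra.adjoin ℤ {ψ 1} = ⊤) {u t : R} (hu : IsUnit u) :
    closure {pair ψ u 0, pair ψ t 1} = ⊤ := by
  have hone : AddSubgroup.zmultiples (1 : ZMod p) = ⊤ :=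
    (AddSubgroup.eq_top_iff' _).mpr fun a => ⟨a.cast, by simp⟩
  exact eq_top_of_pair_mem hone hψ hu (subset_closure (Set.mem_insert _ _))
    (subset_closure (Set.mem_insert_of_mem _ rfl))

theorem closure_pair_one_eq_top (hψ : Algebra.adjoin ℤ {ψ 1} = ⊤) {u t : R} (hu : IsUnit u) :
    closure {pair ψ (u + t) 1, pair ψ t 1} = ⊤ := by
  have hmul : pair ψ u 0 * pair ψ t 1 = pair ψ (u + t) 1 := by
    rw [pair_mul_pair, AddChar.map_zero_eq_one, one_mul, zero_add]
  rw [eq_top_iff, ← closure_pair_eq_top hψ hu (t := t), closure_le]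
  have ht : pair ψ t 1 ∈ closure {pair ψ (u + t) 1, pair ψ t 1} :=
    subset_closure (Set.mem_insert_of_mem _ rfl)
  rintro _ (rfl | rfl)
  · rw [eq_mul_inv_of_mul_eq hmul]
    exact mul_mem (subset_closure (Set.mem_insert _ _)) (inv_mem ht)
  · exact ht

-- The images `(r, a)` of the two triples have ratios `r / a` equal to `2, 0, 1` and `∞, 3, 4`: six
-- distinct points of the projective line over `ZMod p`.
theorem toProd_notMem_zpowers (hp : 5 ≤ p) (ε : R →+* ZMod p) :
    ∀ s ∈ ({pair ψ 2 1, pair ψ 0 1, pair ψ 2 1 * pair ψ 0 1} : Set (AddCharSemidirect ψ)),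
    ∀ t ∈ ({pair ψ 1 0, pair ψ 3 1, pair ψ 1 0 * pair ψ 3 1} : Set (AddCharSemidirect ψ)),
      toProd ε (map_addChar_eq_one ψ ε) s ∉ zpowers (toProd ε (map_addChar_eq_one ψ ε) t) := by
  have two_ne : (2 : ZMod p) ≠ 0 := zmod_natCast_ne_zero_of_lt two_ne_zero (by lia)
  have three_ne : (3 : ZMod p) ≠ 0 := zmod_natCast_ne_zero_of_lt three_ne_zero (by lia)
  have four_ne : (2 * 2 : ZMod p) ≠ 0 := mul_ne_zero two_ne two_ne
  have six_ne : (2 * 3 : ZMod p) ≠ 0 := mul_ne_zero two_ne three_ne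
  rintro s (rfl | rfl | rfl) t (rfl | rfl | rfl)
  all_goals
    simp only [pair_mul_pair, toProd_pair, map_add, map_mul, map_addChar_eq_one, map_ofNat,
      map_zero, map_one]
    exact ofAdd_notMem_zpowers_ofAdd_of_det_ne_zero (by grind)

theorem isBeauvilleStructure_pair (hp : 5 ≤ p)
    (hsum : ∀ a ≠ 0, ∑ m ∈ Finset.range p, ψ a ^ m = 0) (hψ : Algebra.adjoin ℤ {ψ 1} = ⊤)
    (h2 : IsUnit (2 : R)) (ε : R →+* ZMod p) :
    IsBeauvilleStructure (pair ψ 2 1) (pair ψ 0 1) (pair ψ 1 0) (pair ψ 3 1) := by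
  have two_ne : (1 + 1 : ZMod p) ≠ 0 := by
    simpa [one_add_one_eq_two] using zmod_natCast_ne_zero_of_lt two_ne_zero (by lia : 2 < p)
  refine isBeauvilleStructure_of_map_notMem_zpowers _ (Fact.out : p.Prime) ?_
    (closure_pair_eq_top hψ isUnit_one) ?_ (toProd_notMem_zpowers hp ε)
  · simpa using closure_pair_one_eq_top hψ (t := 0) h2
  · rintro s (rfl | rfl | rfl)
    · exact pair_pow_eq_one (hsum 1 one_ne_zero) (by simp)
    · exact pair_pow_eq_one (hsum 1 one_ne_zero) (by simp)
    · exact pair_pow_eq_one (hsum (1 + 1) two_ne) (by simp)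

end ZMod

end AddCharSemidirect

section Cyclotomic

open NumberField Ideal

variable {p : ℕ} {K : Type*} [Field K] [Fact p.Prime] {ζ : K} (hζ : IsPrimitiveRoot ζ p)

/-- The ring `ℤ[ζ] / (ζ - 1) ^ n` for a primitive `p`-th root of unity `ζ`, with `ℤ[ζ]` realized as
the ring of integers of the ambient field. Since `p` is associated to `(ζ - 1) ^ (p - 1)`, the
exponent `n = (p - 1) * f + 1` makes `p ^ f` the last nonzero power of `p`. -/
abbrev CyclotomicQuotient (n : ℕ) : Type _ := 𝓞 K ⧸ span {(hζ.toInteger - 1) ^ n}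

namespace CyclotomicQuotient

/-- The additive character `a ↦ ζ ^ a` of `ZMod p`, through which `ZMod p` acts on
`ℤ[ζ] / (ζ - 1) ^ n`. -/
noncomputable def zetaChar (n : ℕ) : AddChar (ZMod p) (CyclotomicQuotient hζ n) :=
  (Ideal.Quotient.mk _).toMonoidHom.compAddChar
    (AddChar.zmodChar p hζ.toInteger_isPrimitiveRoot.pow_eq_one)

theorem zetaChar_apply (n : ℕ) (a : ZMod p) :
    zetaChar hζ n a = Ideal.Quotient.mk (span {(hζ.toInteger - 1) ^ n}) hζ.toInteger ^ a.val := rfl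

theorem geom_sum_zetaChar_eq_zero (n : ℕ) {a : ZMod p} (ha : a ≠ 0) :
    ∑ m ∈ Finset.range p, zetaChar hζ n a ^ m = 0 := by
  have hsum := geom_sum_zmodChar_eq_zero hζ.toInteger_isPrimitiveRoot ha
  simp only [AddChar.zmodChar_apply] at hsum
  simp only [zetaChar_apply, ← map_pow, ← map_sum, hsum, map_zero]

theorem natCast_pow_mul_mk_eq_zero_iff (f k : ℕ) (r : 𝓞 K) :
    Ideal.Quotient.mk (span {(hζ.toInteger - 1) ^ ((p - 1) * f + k)}) ((p : 𝓞 K) ^ f * r) = 0 ↔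
      (hζ.toInteger - 1) ^ k ∣ r := by
  have hassoc : Associated ((hζ.toInteger - 1) ^ ((p - 1) * f)) ((p : 𝓞 K) ^ f) := by
    rw [pow_mul]
    exact (IsCyclotomicExtension.Rat.associated_zeta_sub_one_pow_prime p hζ).pow_pow
  have hne : (hζ.toInteger - 1) ^ ((p - 1) * f) ≠ 0 := by
    refine pow_ne_zero _ (sub_ne_zero.mpr ?_)
    exact hζ.toInteger_isPrimitiveRoot.ne_one (Fact.out : p.Prime).one_lt
  rw [Ideal.Quotient.eq_zero_iff_dvd, ← (hassoc.mul_right r).dvd_iff_dvd_right, pow_add]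
  exact mul_dvd_mul_iff_left hne

variable [NumberField K] [IsCyclotomicExtension {p} ℚ K]

theorem adjoin_zetaChar_one_eq_top (n : ℕ) : Algebra.adjoin ℤ {zetaChar hζ n 1} = ⊤ := by
  have hmk : zetaChar hζ n 1 =
      Ideal.Quotient.mkₐ ℤ (span {(hζ.toInteger - 1) ^ n}) hζ.toInteger := by
    have : Fact (1 < p) := ⟨(Fact.out : p.Prime).one_lt⟩
    rw [zetaChar_apply, ZMod.val_one, pow_one, Ideal.Quotient.mkₐ_eq_mk]
  rw [hmk, ← AlgHom.map_adjoin_singleton, IsCyclotomicExtension.Rat.adjoin_singleton_eq_top hζ,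
    Algebra.map_top, AlgHom.range_eq_top]
  exact Ideal.Quotient.mkₐ_surjective ℤ _

theorem absNorm_span_zeta_sub_one : absNorm (span {hζ.toInteger - 1}) = p := by
  have : IsCyclotomicExtension {p ^ (0 + 1)} ℚ K := by simpa
  have hζ' : IsPrimitiveRoot ζ (p ^ (0 + 1)) := by simpa
  exact IsCyclotomicExtension.Rat.absNorm_span_zeta_sub_one p 0 hζ'

theorem card_quotient_span_zeta_sub_one : Nat.card (𝓞 K ⧸ span {hζ.toInteger - 1}) = p := by
  rw [← Submodule.cardQuot_apply, ← absNorm_apply, absNorm_span_zeta_sub_one]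

theorem card_eq (n : ℕ) : Nat.card (CyclotomicQuotient hζ n) = p ^ n := by
  rw [← Submodule.cardQuot_apply, ← absNorm_apply, ← span_singleton_pow, map_pow,
    absNorm_span_zeta_sub_one]

theorem nonempty_ringHom_zmod {n : ℕ} (hn : n ≠ 0) :
    Nonempty (CyclotomicQuotient hζ n →+* ZMod p) := by
  have hcard := card_quotient_span_zeta_sub_one hζ
  have : Finite (𝓞 K ⧸ span {hζ.toInteger - 1}) :=
    Nat.finite_of_card_ne_zero (hcard.trans_ne (Fact.out : p.Prime).ne_zero)
  have := Fintype.ofFinite (𝓞 K ⧸ span {hζ.toInteger - 1})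
  have e := ZMod.ringEquivOfPrime _ (Fact.out : p.Prime) (Nat.card_eq_fintype_card.symm.trans hcard)
  have hle : span {(hζ.toInteger - 1) ^ n} ≤ span {hζ.toInteger - 1} :=
    span_singleton_le_span_singleton.mpr (dvd_pow_self _ hn)
  exact ⟨e.symm.toRingHom.comp (Ideal.Quotient.factor hle)⟩

theorem charP (f : ℕ) : CharP (CyclotomicQuotient hζ ((p - 1) * f + 1)) (p ^ (f + 1)) := by
  have hnot : ¬ p ^ f • (1 : CyclotomicQuotient hζ ((p - 1) * f + 1)) = 0 := by
    have hunit := (natCast_pow_mul_mk_eq_zero_iff hζ f 1 1).not.mpr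
      (by simpa [isUnit_iff_dvd_one] using hζ.zeta_sub_one_prime'.not_isUnit)
    simpa using hunit
  have hpow : p ^ (f + 1) • (1 : CyclotomicQuotient hζ ((p - 1) * f + 1)) = 0 := by
    have hdvd := (natCast_pow_mul_mk_eq_zero_iff hζ f 1 p).mpr
      (by simpa using hζ.toInteger_sub_one_dvd_prime')
    simpa [pow_succ] using hdvd
  exact addOrderOf_eq_prime_pow hnot hpow ▸ CharP.addOrderOf_one _

theorem card_span_natCast_pow (f : ℕ) :
    Nat.card (span {((p ^ f : ℕ) : CyclotomicQuotient hζ ((p - 1) * f + 1))}) = p := by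
  let R := CyclotomicQuotient hζ ((p - 1) * f + 1)
  have hann : torsionOf (𝓞 K) R ((p ^ f : ℕ) : R) = span {hζ.toInteger - 1} := by
    ext r
    have hdvd := natCast_pow_mul_mk_eq_zero_iff hζ f 1 r
    rw [pow_one] at hdvd
    rw [mem_torsionOf_iff, mem_span_singleton, ← hdvd, Algebra.smul_def, mul_comm,
      map_mul, map_pow, map_natCast, Nat.cast_pow]
    rfl
  have hspan : (span {((p ^ f : ℕ) : R)}).restrictScalars (𝓞 K) =
      Submodule.span (𝓞 K) {((p ^ f : ℕ) : R)} :=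
    Submodule.restrictScalars_span _ _ Ideal.Quotient.mk_surjective _
  calc Nat.card (span {((p ^ f : ℕ) : R)})
      = Nat.card ((span {((p ^ f : ℕ) : R)}).restrictScalars (𝓞 K)) := rfl
    _ = Nat.card (𝓞 K ⧸ torsionOf (𝓞 K) R ((p ^ f : ℕ) : R)) := by
      rw [hspan, Nat.card_congr (quotTorsionOfEquivSpanSingleton (𝓞 K) R _).toEquiv]
    _ = p := by rw [hann, card_quotient_span_zeta_sub_one]

theorem isUnit_two (hp : p ≠ 2) (f : ℕ) :
    IsUnit (2 : CyclotomicQuotient hζ ((p - 1) * f + 1)) := by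
  have := charP hζ f
  have hcop : Nat.Coprime 2 (p ^ (f + 1)) :=
    ((Nat.coprime_primes Nat.prime_two Fact.out).mpr hp.symm).pow_right _
  exact mod_cast isUnit_natCast_of_coprime_charP (CyclotomicQuotient hζ ((p - 1) * f + 1)) hcop

theorem isBeauvilleGroup_addCharSemidirect_zetaChar (hp : 5 ≤ p) (f : ℕ) :
    IsBeauvilleGroup (AddCharSemidirect (zetaChar hζ ((p - 1) * f + 1))) := by
  obtain ⟨ε⟩ := nonempty_ringHom_zmod hζ (Nat.succ_ne_zero ((p - 1) * f))
  exact ⟨_, _, _, _, AddCharSemidirect.isBeauvilleStructure_pair hp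
    (fun _ => geom_sum_zetaChar_eq_zero hζ _) (adjoin_zetaChar_one_eq_top hζ _)
    (isUnit_two hζ (by lia) f) ε⟩

end CyclotomicQuotient

end Cyclotomic

theorem exists_large_beauville_group_with_small_power_subgroup
    {p : ℕ} (hp : p.Prime) (hp5 : 5 ≤ p) (C : ℕ) (hC : 0 < C) :
    ∃ (G : Type) (_ : Group G), Finite G ∧ IsPGroup p G ∧
      (∃ a b : G, closure ({a, b} : Set G) = ⊤) ∧
      C < Nat.card G ∧
      ∃ e : ℕ, Monoid.exponent G = p ^ e ∧
        Nat.card (powSubgroup G (p ^ (e - 1))) = p ∧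
        IsBeauvilleGroup G := by
  have : Fact p.Prime := ⟨hp⟩
  have : IsCyclotomicExtension {p} ℚ (CyclotomicField p ℚ) :=
    CyclotomicField.isCyclotomicExtension p ℚ
  have hζ := IsCyclotomicExtension.zeta_spec p ℚ (CyclotomicField p ℚ)
  let n := (p - 1) * C + 1
  let G := AddCharSemidirect (CyclotomicQuotient.zetaChar hζ n)
  have hcharP := CyclotomicQuotient.charP hζ C
  have hsum (a : ZMod p) (ha : a ≠ 0) := CyclotomicQuotient.geom_sum_zetaChar_eq_zero hζ n ha
  have hBeauville : IsBeauvilleGroup G :=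
    CyclotomicQuotient.isBeauvilleGroup_addCharSemidirect_zetaChar hζ hp5 C
  obtain ⟨x, y, _, _, hgen, _⟩ := id hBeauville
  have hcard : Nat.card G = p ^ (n + 1) := by
    rw [AddCharSemidirect.natCard, CyclotomicQuotient.card_eq, Nat.card_zmod, pow_succ p n]
  have hlt : C < Nat.card G := by
    have hle : C ≤ (p - 1) * C := Nat.le_mul_of_pos_left C (by lia)
    exact hcard ▸ (by lia : C < n + 1).trans (Nat.lt_pow_self hp.one_lt)
  have hfin : Finite G := Nat.finite_of_card_ne_zero (Nat.ne_zero_of_lt hlt)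
  have hexp : Monoid.exponent G = p ^ (C + 1) :=
    AddCharSemidirect.exponent_eq hsum (dvd_pow_self p C.succ_ne_zero)
  have hpow : Nat.card (powSubgroup G (p ^ C)) = p :=
    (AddCharSemidirect.card_powSubgroup hsum (dvd_pow_self p hC.ne')).trans
      (CyclotomicQuotient.card_span_natCast_pow hζ C)
  exact ⟨G, inferInstance, hfin, IsPGroup.of_card hcard, ⟨x, y, hgen⟩, hlt, C + 1, hexp, hpow,
    hBeauville⟩
end

section
/- For every prime p ≥ 5 and every positive integer m, there exists a finite p-group G that can be generated by two elements such that, writing exp G = p^e, one has |G^{p^{e-1}}| = p^m, and G is not a Beauville group. -/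
open Subgroup

/-!
Let `C` be a finite cyclic `p`-group and `χ : C → Oˣ` a character that is neither trivial nor
injective, with values in a domain `O`; form `G = M ⋊ C` for an `O`-module `M`. If `c` generates
`C` and `χ (c ^ n) = 1`, the geometric sum `∑ i < n, χ(c)ⁱ` vanishes in `O`, so that
`(a, c) ^ n = c ^ n` for every `a ∈ M`. Every generating pair of `G` contains an element lying over
a generator of `C`, so a nontrivial element of `ker χ` lies in all the sets `Σ(x, y)` and `G` is
not a Beauville group. The same vanishing gives `G ^ n = n M` when `n` kills `C`.

For `O = ℤ[ζ]` with `ζ` a primitive `p ^ (m + 1)`-th root of unity, `π = ζ - 1` generates a prime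
ideal of norm `p` and `π ^ m ∣ p`. Take `C` of order `p ^ (m + 2)`, with `χ` sending a generator to
`ζ`, and `M = O / (p ^ (m + 2) π ^ m)`. Then `exp G = p ^ (m + 3)`, and `p ^ (m + 2) M` is
isomorphic to `O / (π ^ m)`, which has order `p ^ m`.
-/

section Beauville

variable {G : Type*} [Group G]

theorem mem_sigmaSet_of_mem_zpowers {x y z : G} (hz : z ∈ zpowers x ∨ z ∈ zpowers y) :
    z ∈ SigmaSet x y :=
  Set.mem_iUnion.2 ⟨1, by simpa using Or.inl hz⟩

theorem not_isBeauvilleGroup_of_mem_zpowers {z : G} (hz : z ≠ 1)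
    (h : ∀ x y : G, closure {x, y} = ⊤ → z ∈ zpowers x ∨ z ∈ zpowers y) :
    ¬ IsBeauvilleGroup G := by
  rintro ⟨x₁, y₁, x₂, y₂, h₁, h₂, hinter⟩
  have hz_mem : z ∈ SigmaSet x₁ y₁ ∩ SigmaSet x₂ y₂ :=
    ⟨mem_sigmaSet_of_mem_zpowers (h x₁ y₁ h₁), mem_sigmaSet_of_mem_zpowers (h x₂ y₂ h₂)⟩
  rw [hinter] at hz_mem
  exact hz hz_mem

theorem exponent_eq_prime_pow_of_powSubgroup_ne_bot {p k : ℕ} (hp : p.Prime)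
    (hG : ∀ g : G, g ^ p ^ (k + 1) = 1) (hk : powSubgroup G (p ^ k) ≠ ⊥) :
    Monoid.exponent G = p ^ (k + 1) := by
  have : Fact p.Prime := ⟨hp⟩
  obtain ⟨g, hg⟩ : ∃ g : G, g ^ p ^ k ≠ 1 := by
    by_contra! h
    exact hk (closure_eq_bot_iff.2 (by rintro _ ⟨g, rfl⟩; exact h g))
  exact Nat.dvd_antisymm (Monoid.exponent_dvd_of_forall_pow_eq_one hG)
    (orderOf_eq_prime_pow hg (hG g) ▸ Monoid.order_dvd_exponent g)

end Beauville

section CyclicPGroup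

variable {C : Type*} [CommGroup C] [IsCyclic C]

theorem zpowers_eq_top_of_closure_pair_eq_top {c d : C} (hc : orderOf c ∣ orderOf d)
    (hd : IsOfFinOrder d) (hcd : closure {c, d} = ⊤) : zpowers d = ⊤ := by
  have hle : closure {c, d} ≤ (powMonoidHom (orderOf d) : C →* C).ker := by
    rw [closure_le]
    rintro x (rfl | rfl)
    · exact orderOf_dvd_iff_pow_eq_one.1 hc
    · exact pow_orderOf_eq_one x
  have hexp : Nat.card C ∣ orderOf d := by
    rw [← IsCyclic.exponent_eq_card]
    exact Monoid.exponent_dvd_of_forall_pow_eq_one fun x ↦ hle (hcd ▸ mem_top x)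
  have : Finite (zpowers d) := hd.finite_zpowers
  refine eq_top_of_card_eq _ ?_
  rw [Nat.card_zpowers]
  exact Nat.dvd_antisymm (orderOf_dvd_natCard d) hexp

theorem zpowers_eq_top_or_of_closure_pair_eq_top {p : ℕ} (hp : p.Prime) (hC : IsPGroup p C)
    {c d : C} (hcd : closure {c, d} = ⊤) : zpowers c = ⊤ ∨ zpowers d = ⊤ := by
  have : Fact p.Prime := ⟨hp⟩
  have hfin := hC.isOfFinOrder hp.ne_zero
  obtain ⟨i, hi⟩ := IsPGroup.iff_orderOf.1 hC c
  obtain ⟨j, hj⟩ := IsPGroup.iff_orderOf.1 hC d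
  rcases le_total i j with hij | hji
  · exact .inr (zpowers_eq_top_of_closure_pair_eq_top (hi ▸ hj ▸ pow_dvd_pow p hij) (hfin d) hcd)
  · rw [Set.pair_comm] at hcd
    exact .inl (zpowers_eq_top_of_closure_pair_eq_top (hi ▸ hj ▸ pow_dvd_pow p hji) (hfin c) hcd)

end CyclicPGroup

theorem zpowers_ofAdd_one_eq_top (n : ℕ) : zpowers (Multiplicative.ofAdd (1 : ZMod n)) = ⊤ := by
  refine (eq_top_iff' _).2 fun x ↦ ?_
  obtain ⟨i, hi⟩ := ZMod.intCast_surjective x.toAdd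
  exact ⟨i, by simp [← ofAdd_zsmul, hi]⟩

theorem pow_eq_one_multiplicative_zmod {n : ℕ} (c : Multiplicative (ZMod n)) : c ^ n = 1 :=
  ZModModule.char_nsmul_eq_zero n c.toAdd

theorem exists_noninjective_monoidHom_zmod {U : Type*} [Group U] {n : ℕ} {u : U} (hu : u ≠ 1)
    (hdvd : orderOf u ∣ n) (hne : orderOf u ≠ n) :
    ∃ χ : Multiplicative (ZMod n) →* U,
      χ (Multiplicative.ofAdd 1) = u ∧ χ ≠ 1 ∧ ¬ Function.Injective χ := by
  have hord : orderOf (Multiplicative.ofAdd (1 : ZMod n)) = n := by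
    rw [orderOf_ofAdd_eq_addOrderOf, ZMod.addOrderOf_one]
  have hgen := (eq_top_iff' _).1 (zpowers_ofAdd_one_eq_top n)
  let χ := monoidHomOfForallMemZpowers hgen (hord.symm ▸ hdvd)
  have hχ : χ (Multiplicative.ofAdd 1) = u := monoidHomOfForallMemZpowers_apply_gen hgen _
  refine ⟨χ, hχ, fun h ↦ hu ?_, fun h ↦ hne ?_⟩
  · rw [← hχ, h, MonoidHom.one_apply]
  · rw [← hχ, orderOf_injective χ h, hord]

section SemidirectByCharacter

open SemidirectProduct Multiplicative

variable {C O M : Type*} [Group C] [Ring O] [AddCommGroup M] [Module O M]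

variable (M) in
/-- The action of `C` on the additive group of an `O`-module `M`, written multiplicatively, in
which `c` acts as the scalar `χ c`. -/
def characterAction (χ : C →* Oˣ) : C →* MulAut (Multiplicative M) :=
  (MulAutMultiplicative M).symm.toMonoidHom.comp ((DistribMulAction.toAddAut Oˣ M).comp χ)

theorem characterAction_ofAdd (χ : C →* Oˣ) (c : C) (a : M) :
    characterAction M χ c (ofAdd a) = ofAdd ((χ c : O) • a) :=
  rfl

variable (M) in
/-- The semidirect product `M ⋊ C` of an `O`-module `M` by a group `C` acting through scalars by
the character `χ`; it generalises the affine group of `O`. -/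
abbrev SemidirectByCharacter (χ : C →* Oˣ) : Type _ :=
  Multiplicative M ⋊[characterAction M χ] C

namespace SemidirectByCharacter

variable {χ : C →* Oˣ}

instance [Finite M] [Finite C] : Finite (SemidirectByCharacter M χ) :=
  .of_equiv _ SemidirectProduct.equivProd.symm

theorem pow_left (g : SemidirectByCharacter M χ) (n : ℕ) :
    (g ^ n).left = ofAdd ((∑ i ∈ Finset.range n, (χ g.right : O) ^ i) • g.left.toAdd) := by
  induction n with
  | zero => simp
  | succ n ih =>
    rw [pow_succ', mul_left, ih, characterAction_ofAdd, geom_sum_succ, add_smul, mul_smul,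
      one_smul, add_comm, ofAdd_add, ofAdd_toAdd]

theorem pow_right (g : SemidirectByCharacter M χ) (n : ℕ) : (g ^ n).right = g.right ^ n :=
  map_pow rightHom g n

theorem pow_eq_inr_of_apply_ne_one [NoZeroDivisors O] {g : SemidirectByCharacter M χ}
    (hg : χ g.right ≠ 1) {n : ℕ} (hn : χ (g.right ^ n) = 1) : g ^ n = inr (g.right ^ n) := by
  have hsum : ∑ i ∈ Finset.range n, (χ g.right : O) ^ i = 0 := by
    have hsub : (χ g.right : O) - 1 ≠ 0 := sub_ne_zero.2 (by simpa using hg)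
    refine (mul_eq_zero.1 ?_).resolve_left hsub
    rw [mul_geom_sum, ← Units.val_pow_eq_pow_val, ← map_pow, hn, Units.val_one, sub_self]
  ext
  · rw [pow_left, hsum, zero_smul, ofAdd_zero, left_inr]
  · rw [pow_right, right_inr]

theorem pow_eq_inl_of_apply_eq_one {g : SemidirectByCharacter M χ} (hg : χ g.right = 1) {n : ℕ}
    (hn : g.right ^ n = 1) : g ^ n = inl (g.left ^ n) := by
  ext
  · simp [pow_left, hg]
  · rw [pow_right, hn, right_inl]

variable (M χ) in
theorem powSubgroup_eq_map_inl [NoZeroDivisors O] {n : ℕ} (hn : ∀ c : C, c ^ n = 1) :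
    powSubgroup (SemidirectByCharacter M χ) n =
      (powMonoidHom n : Multiplicative M →* Multiplicative M).range.map inl := by
  refine le_antisymm ((closure_le _).2 ?_) ?_
  · rintro _ ⟨g, rfl⟩
    by_cases hg : χ g.right = 1
    · exact ⟨g.left ^ n, ⟨g.left, rfl⟩, (pow_eq_inl_of_apply_eq_one hg (hn _)).symm⟩
    · have hpow : g ^ n = 1 := by
        rw [pow_eq_inr_of_apply_ne_one hg (by rw [hn, map_one]), hn, map_one]
      simpa only [hpow, SetLike.mem_coe] using one_mem _
  · rintro _ ⟨_, ⟨a, rfl⟩, rfl⟩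
    exact subset_closure ⟨inl a, (map_pow inl a n).symm⟩

variable (M χ) in
theorem natCard_powSubgroup [NoZeroDivisors O] {n : ℕ} (hn : ∀ c : C, c ^ n = 1) :
    Nat.card (powSubgroup (SemidirectByCharacter M χ) n) =
      Nat.card (Set.range fun a : M ↦ n • a) := by
  rw [powSubgroup_eq_map_inl M χ hn, card_map_of_injective inl_injective]
  rfl

theorem pow_eq_one [NoZeroDivisors O] {n l : ℕ} (hC : ∀ c : C, c ^ n = 1)
    (hM : ∀ a : M, (n * l) • a = 0) (g : SemidirectByCharacter M χ) : g ^ (n * l) = 1 := by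
  have hgn : g ^ n ∈ powSubgroup (SemidirectByCharacter M χ) n := subset_closure ⟨g, rfl⟩
  rw [powSubgroup_eq_map_inl M χ hC] at hgn
  obtain ⟨_, ⟨a, rfl⟩, ha⟩ := hgn
  have hal : a ^ (n * l) = 1 := hM a.toAdd
  rw [pow_mul, ← ha, ← map_pow, powMonoidHom_apply, ← pow_mul, hal, map_one]

theorem closure_inl_inr_eq_top {t : C} (ht : zpowers t = ⊤)
    (hO : Algebra.adjoin ℤ {(χ t : O)} = ⊤) {v : M} (hv : Submodule.span O {v} = ⊤) :
    closure {(inl (ofAdd v) : SemidirectByCharacter M χ), inr t} = ⊤ := by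
  set H := closure {(inl (ofAdd v) : SemidirectByCharacter M χ), inr t}
  have hv_mem : inl (ofAdd v) ∈ H := subset_closure (by simp)
  have ht_mem : inr t ∈ H := subset_closure (by simp)
  have hright (c : C) : inr c ∈ H := by
    obtain ⟨i, rfl⟩ := ht ▸ mem_top c
    exact map_zpow (inr : C →* SemidirectByCharacter M χ) t i ▸ zpow_mem ht_mem i
  have hsmul (r : O) : ∀ a : M, inl (ofAdd a) ∈ H → inl (ofAdd (r • a)) ∈ H := by
    have hr : r ∈ Algebra.adjoin ℤ {(χ t : O)} := hO ▸ Algebra.mem_top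
    induction hr using Algebra.adjoin_induction with
    | mem _ hx =>
      intro a ha
      rw [Set.mem_singleton_iff.1 hx, ← characterAction_ofAdd, inl_aut]
      exact mul_mem (mul_mem ht_mem ha) (hright t⁻¹)
    | algebraMap i =>
      intro a ha
      rw [algebraMap_smul, ofAdd_zsmul, map_zpow]
      exact zpow_mem ha i
    | add r s _ _ hr hs =>
      intro a ha
      rw [add_smul, ofAdd_add, map_mul]
      exact mul_mem (hr a ha) (hs a ha)
    | mul r s _ _ hr hs =>
      intro a ha
      rw [mul_smul]
      exact hr _ (hs a ha)
  refine eq_top_iff.2 fun g _ ↦ ?_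
  obtain ⟨r, hr⟩ := Submodule.mem_span_singleton.1 (hv ▸ Submodule.mem_top : g.left.toAdd ∈ _)
  rw [← inl_left_mul_inr_right g, ← ofAdd_toAdd g.left, ← hr]
  exact mul_mem (hsmul r v hv_mem) (hright _)

theorem inr_mem_zpowers_of_zpowers_right_eq_top [NoZeroDivisors O] (hχ : χ ≠ 1) {s : C}
    (hs : χ s = 1) {g : SemidirectByCharacter M χ} (hg_fin : IsOfFinOrder g.right)
    (hg : zpowers g.right = ⊤) : inr s ∈ zpowers g := by
  obtain ⟨n, hn : g.right ^ n = s⟩ := hg_fin.mem_powers_iff_mem_zpowers.2 (hg ▸ mem_top s)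
  have hgχ : χ g.right ≠ 1 := fun h ↦ hχ <| by
    ext c
    obtain ⟨i, rfl⟩ := hg ▸ mem_top c
    simp [h]
  rw [← hn, ← pow_eq_inr_of_apply_ne_one hgχ (hn ▸ hs)]
  exact npow_mem_zpowers g n

variable (M) in
theorem not_isBeauvilleGroup {C : Type*} [CommGroup C] [IsCyclic C] [NoZeroDivisors O] {p : ℕ}
    (hp : p.Prime) (hC : IsPGroup p C) {χ : C →* Oˣ} (hχ : χ ≠ 1)
    (hχ_inj : ¬ Function.Injective χ) : ¬ IsBeauvilleGroup (SemidirectByCharacter M χ) := by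
  obtain ⟨s, hs, hs_ne⟩ : ∃ s, χ s = 1 ∧ s ≠ 1 := by
    simpa [injective_iff_map_eq_one] using hχ_inj
  have hz_ne : (inr s : SemidirectByCharacter M χ) ≠ 1 :=
    (map_ne_one_iff inr inr_injective).2 hs_ne
  refine not_isBeauvilleGroup_of_mem_zpowers hz_ne fun x y hxy ↦ ?_
  have hright : closure {x.right, y.right} = ⊤ := by
    rw [← rightHom_eq_right, ← Set.image_pair, ← MonoidHom.map_closure, hxy]
    exact map_top_of_surjective _ rightHom_surjective
  exact (zpowers_eq_top_or_of_closure_pair_eq_top hp hC hright).imp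
    (inr_mem_zpowers_of_zpowers_right_eq_top hχ hs (hC.isOfFinOrder hp.ne_zero _))
    (inr_mem_zpowers_of_zpowers_right_eq_top hχ hs (hC.isOfFinOrder hp.ne_zero _))

end SemidirectByCharacter

end SemidirectByCharacter

section Quotient

open Ideal

theorem natCard_range_smul_quotient_span_mul {O : Type*} [CommRing O] {a : O}
    (ha : IsLeftRegular a) (b : O) :
    Nat.card (Set.range fun x : O ⧸ span {a * b} ↦ a • x) = Nat.card (O ⧸ span {b}) := by
  set f : O →ₗ[O] O ⧸ span {a * b} := (LinearMap.lsmul O _ a).comp (Submodule.mkQ (span {a * b}))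
  have hrange : (LinearMap.range f : Set (O ⧸ span {a * b})) = Set.range fun x ↦ a • x :=
    congrArg SetLike.coe <| LinearMap.range_comp_of_range_eq_top _ (Submodule.range_mkQ _)
  have hker : LinearMap.ker f = span {b} := by
    ext x
    change Ideal.Quotient.mk _ (a * x) = 0 ↔ _
    rw [Quotient.eq_zero_iff_mem, mem_span_singleton, mem_span_singleton]
    exact ⟨fun ⟨y, hy⟩ ↦ ⟨y, ha (by simpa [mul_assoc] using hy)⟩, mul_dvd_mul_left a⟩
  rw [← hrange, ← hker]
  exact Nat.card_congr f.quotKerEquivRange.symm.toEquiv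

theorem nsmul_quotient_span_eq_zero {O : Type*} [CommRing O] {a : O} {n : ℕ} (h : a ∣ (n : O))
    (x : O ⧸ span {a}) : n • x = 0 := by
  obtain ⟨y, rfl⟩ := Ideal.Quotient.mk_surjective x
  rw [← map_nsmul, Quotient.eq_zero_iff_mem, mem_span_singleton, nsmul_eq_mul]
  exact h.mul_right y

theorem finite_quotient_span_singleton {O : Type*} [CommRing O] [IsDomain O] [Module.Free ℤ O]
    [Module.Finite ℤ O] {a : O} (ha : a ≠ 0) : Finite (O ⧸ span {a}) :=
  finiteQuotientOfFreeOfNeBot _ (mt span_singleton_eq_bot.1 ha)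

theorem span_one_quotient_eq_top {O : Type*} [CommRing O] (I : Ideal O) :
    Submodule.span O {(1 : O ⧸ I)} = ⊤ :=
  Submodule.eq_top_iff'.2 fun x ↦ by
    obtain ⟨r, rfl⟩ := Ideal.Quotient.mk_surjective x
    exact Submodule.mem_span_singleton.2 ⟨r, by rw [Algebra.smul_def, mul_one]; rfl⟩

namespace SemidirectByCharacter

variable {C O : Type*} [Group C] [CommRing O] [IsDomain O] [CharZero O] (χ : C →* Oˣ)

theorem natCard_powSubgroup_quotient {n : ℕ} (hn : n ≠ 0) (hC : ∀ c : C, c ^ n = 1) (b : O) :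
    Nat.card (powSubgroup (SemidirectByCharacter (O ⧸ span {(n : O) * b}) χ) n) =
      Nat.card (O ⧸ span {b}) := by
  rw [natCard_powSubgroup _ χ hC,
    ← natCard_range_smul_quotient_span_mul (IsRegular.of_ne_zero (Nat.cast_ne_zero.2 hn)).left b]
  simp only [Nat.cast_smul_eq_nsmul]

theorem exponent_quotient {p k : ℕ} (hp : p.Prime) (hC : ∀ c : C, c ^ p ^ k = 1) {b : O}
    (hb : b ∣ (p : O)) (hb_unit : ¬ IsUnit b) :
    Monoid.exponent (SemidirectByCharacter (O ⧸ span {((p ^ k : ℕ) : O) * b}) χ) =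
      p ^ (k + 1) := by
  have hM (x : O ⧸ span {((p ^ k : ℕ) : O) * b}) : (p ^ k * p) • x = 0 :=
    nsmul_quotient_span_eq_zero (by rw [Nat.cast_mul]; exact mul_dvd_mul_left _ hb) x
  refine exponent_eq_prime_pow_of_powSubgroup_ne_bot hp (fun g ↦ pow_eq_one hC hM g) fun hbot ↦ ?_
  have hcard := natCard_powSubgroup_quotient χ (pow_ne_zero k hp.ne_zero) hC b
  rw [hbot, card_bot, eq_comm, Nat.card_eq_one_iff_unique] at hcard
  exact hb_unit (span_singleton_eq_top.1 (Ideal.Quotient.subsingleton_iff.1 hcard.1))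

end SemidirectByCharacter

end Quotient

theorem le_totient_prime_pow_succ {p : ℕ} (hp : p.Prime) (m : ℕ) : m ≤ (p ^ (m + 1)).totient := by
  rw [Nat.totient_prime_pow_succ hp]
  exact (Nat.lt_pow_self hp.one_lt).le.trans
    (Nat.le_mul_of_pos_right _ (Nat.sub_pos_of_lt hp.one_lt))

section Cyclotomic

open Ideal NumberField IsCyclotomicExtension.Rat

variable {K : Type*} [Field K] {ζ : K}

theorem adjoin_toInteger_eq_top {n : ℕ} [NeZero n] [CharZero K] [IsCyclotomicExtension {n} ℚ K]
    (hζ : IsPrimitiveRoot ζ n) : Algebra.adjoin ℤ {hζ.toInteger} = ⊤ := by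
  rw [← hζ.integralPowerBasis_gen]
  exact hζ.integralPowerBasis.adjoin_gen_eq_top

variable {p k : ℕ} [Fact p.Prime] (hζ : IsPrimitiveRoot ζ (p ^ (k + 1)))

theorem exists_noninjective_character_zmod :
    ∃ χ : Multiplicative (ZMod (p ^ (k + 2))) →* (𝓞 K)ˣ,
      (χ (Multiplicative.ofAdd 1) : 𝓞 K) = hζ.toInteger ∧ χ ≠ 1 ∧ ¬ Function.Injective χ := by
  have hu := hζ.toInteger_isPrimitiveRoot.isUnit_unit (NeZero.ne _)
  have hp : 1 < p := (Fact.out : p.Prime).one_lt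
  obtain ⟨χ, hχ, hχ_ne, hχ_inj⟩ := exists_noninjective_monoidHom_zmod
    (hu.ne_one (Nat.one_lt_pow k.succ_ne_zero hp))
    (hu.eq_orderOf ▸ pow_dvd_pow p (k + 1).le_succ) (hu.eq_orderOf ▸ (Nat.pow_lt_pow_succ hp).ne)
  exact ⟨χ, congrArg Units.val hχ, hχ_ne, hχ_inj⟩

variable [NumberField K] [IsCyclotomicExtension {p ^ (k + 1)} ℚ K]

theorem natCard_quotient_span_zeta_sub_one_pow (m : ℕ) :
    Nat.card (𝓞 K ⧸ span {(hζ.toInteger - 1) ^ m}) = p ^ m := by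
  rw [← span_singleton_pow, ← Submodule.cardQuot_apply, ← absNorm_apply, map_pow,
    absNorm_span_zeta_sub_one]

theorem zeta_sub_one_pow_dvd : (hζ.toInteger - 1) ^ k ∣ (p : 𝓞 K) := by
  have h := map_eq_span_zeta_sub_one_pow p k hζ
  rw [map_span, Set.image_singleton, span_singleton_pow, span_singleton_eq_span_singleton,
    IsCyclotomicExtension.Rat.finrank (p ^ (k + 1)) K] at h
  refine (pow_dvd_pow _ (le_totient_prime_pow_succ (Fact.out : p.Prime) k)).trans ?_
  simpa using h.symm.dvd

end Cyclotomic

open Ideal NumberField SemidirectByCharacter in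
theorem exists_non_beauville_group_with_power_subgroup_of_any_size_general
    {p : ℕ} (hp : p.Prime) (m : ℕ) (hm : 0 < m) :
    ∃ (G : Type) (_ : Group G), Finite G ∧ IsPGroup p G ∧
      (∃ a b : G, closure ({a, b} : Set G) = ⊤) ∧
      ∃ e : ℕ, Monoid.exponent G = p ^ e ∧
        Nat.card (powSubgroup G (p ^ (e - 1))) = p ^ m ∧
        ¬ IsBeauvilleGroup G := by
  have : Fact p.Prime := ⟨hp⟩
  -- An opaque `K` avoids the two `ℚ`-algebra structures on `CyclotomicField`, which are not
  -- identified at instance transparency.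
  obtain ⟨K, _, _, _⟩ : ∃ (K : Type) (_ : Field K) (_ : NumberField K),
      IsCyclotomicExtension {p ^ (m + 1)} ℚ K :=
    ⟨CyclotomicField (p ^ (m + 1)) ℚ, inferInstance, inferInstance,
      CyclotomicField.isCyclotomicExtension _ ℚ⟩
  have hζ := IsCyclotomicExtension.zeta_spec (p ^ (m + 1)) ℚ K
  obtain ⟨χ, hχ, hχ_ne, hχ_inj⟩ := exists_noninjective_character_zmod hζ
  have hC := pow_eq_one_multiplicative_zmod (n := p ^ (m + 2))
  have hπ : Prime (hζ.toInteger - 1) := hζ.zeta_sub_one_prime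
  set M := 𝓞 K ⧸ span {((p ^ (m + 2) : ℕ) : 𝓞 K) * (hζ.toInteger - 1) ^ m}
  have hexp : Monoid.exponent (SemidirectByCharacter M χ) = p ^ (m + 3) :=
    exponent_quotient χ hp hC (zeta_sub_one_pow_dvd hζ)
      (mt (isUnit_pow_iff hm.ne').1 hπ.not_isUnit)
  have : Finite M := finite_quotient_span_singleton <|
    mul_ne_zero (Nat.cast_ne_zero.2 (NeZero.ne _)) (pow_ne_zero m hπ.ne_zero)
  refine ⟨SemidirectByCharacter M χ, inferInstance, inferInstance,
    fun g ↦ ⟨m + 3, hexp ▸ Monoid.pow_exponent_eq_one g⟩,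
    ⟨_, _, closure_inl_inr_eq_top (zpowers_ofAdd_one_eq_top _)
      (hχ.symm ▸ adjoin_toInteger_eq_top hζ) (span_one_quotient_eq_top _)⟩,
    m + 3, hexp, ?_, not_isBeauvilleGroup M hp (fun c ↦ ⟨_, hC c⟩) hχ_ne hχ_inj⟩
  exact (natCard_powSubgroup_quotient χ (NeZero.ne _) hC _).trans
    (natCard_quotient_span_zeta_sub_one_pow hζ m)

theorem exists_non_beauville_group_with_power_subgroup_of_any_size
    {p : ℕ} (hp : p.Prime) (hp5 : 5 ≤ p) (m : ℕ) (hm : 0 < m) :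
    ∃ (G : Type) (_ : Group G), Finite G ∧ IsPGroup p G ∧
      (∃ a b : G, closure ({a, b} : Set G) = ⊤) ∧
      ∃ e : ℕ, Monoid.exponent G = p ^ e ∧
        Nat.card (powSubgroup G (p ^ (e - 1))) = p ^ m ∧
        ¬ IsBeauvilleGroup G :=
  exists_non_beauville_group_with_power_subgroup_of_any_size_general hp m hm
end

section
/- Let p be an odd prime and set n₀ = 2 if p > 3 and n₀ = 5 if p = 3. Then for every integer n ≥ n₀ there exists a Beauville group of order p^n. In particular, for every n ≥ 5 there exists a Beauville 3-group of order 3^n. -/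
open Subgroup

/-!
For orders prime to `6`, take the Heisenberg group over `ℤ/k` with its centre pushed forward to
`ℤ/e`, where `e ∣ k`. All its elements have order dividing `k`, and for the standard generators
`x`, `y` each of `x`, `y`, `xy` is linearly independent in `(ℤ/k)²` from each of `xy²`, `xy⁻¹` and
their product, so that `(x, y)` and `(xy², xy⁻¹)` form a Beauville structure.

For `3`-groups, let `B` be the quotient of `C₃ * C₃` by the fourth term of its lower central
series. It has order `3 ^ 5`, and its generators satisfy `x³ = y³ = (xy)⁹ = 1`. The pairs `(x, y)`
and `(x⁻¹y, x⁻¹yxy)` form a Beauville structure of `B`, which lifts to every quotient of the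
triangle group `Δ(3, 3, 9)` lying over `B`: the orders of `x`, `y` and `xy` do not change, so a
nontrivial power of one of them remains nontrivial in `B`. Arbitrarily large finite `3`-groups of
this kind are generated inside `A × B`, where `A` is the group of affine maps of `ℤ[ω] / 3 ^ k`
whose linear part is a cube root of unity. Dividing by normal subgroups of the kernel to `B` then
yields every order `3 ^ n` with `n ≥ 5`.
-/

section General

variable {G H : Type*} [Group G] [Group H]

lemma exists_zpow_zpow_eq_of_orderOf_eq_prime_pow {p k : ℕ} (hp : p.Prime) {u : G}
    (hu : orderOf u = p ^ (k + 1)) {i : ℤ} (hi : u ^ i ≠ 1) :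
    ∃ l : ℤ, (u ^ i) ^ l = u ^ p ^ k := by
  have hgcd_ne : i.natAbs.gcd (p ^ (k + 1)) ≠ p ^ (k + 1) := fun h =>
    hi (orderOf_dvd_iff_zpow_eq_one.1
      (Int.natCast_dvd.2 (hu ▸ Nat.gcd_eq_right_iff_dvd.1 h)))
  have hgcd_dvd : i.gcd (p ^ (k + 1) : ℕ) ∣ p ^ k := by
    obtain ⟨s, hs, hs_eq⟩ := (Nat.dvd_prime_pow hp).1 (Nat.gcd_dvd_right i.natAbs (p ^ (k + 1)))
    have hs_ne : s ≠ k + 1 := by rintro rfl; exact hgcd_ne hs_eq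
    rw [Int.gcd, Int.natAbs_natCast, hs_eq]
    exact pow_dvd_pow p (by omega)
  obtain ⟨c, hc⟩ := hgcd_dvd
  refine ⟨i.gcdA (p ^ (k + 1) : ℕ) * c, ?_⟩
  rw [← zpow_mul, ← zpow_natCast, ← orderOf_dvd_sub_iff_zpow_eq_zpow, hu, hc]
  refine ⟨-(i.gcdB (p ^ (k + 1) : ℕ) * c), ?_⟩
  push_cast [Int.gcd_eq_gcd_ab]
  ring

/-- No nontrivial power of `u` is conjugate to a power of `v`. -/
def ConjDisjoint (u v : G) : Prop :=
  ∀ i j : ℤ, IsConj (u ^ i) (v ^ j) → u ^ i = 1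

lemma ConjDisjoint.of_map (φ : G →* H) {u v : G} (hu : orderOf u ∣ orderOf (φ u))
    (h : ConjDisjoint (φ u) (φ v)) : ConjDisjoint u v := by
  intro i j hconj
  have hφ : φ u ^ i = 1 := h i j (by simpa only [map_zpow] using φ.map_isConj hconj)
  rw [← orderOf_dvd_iff_zpow_eq_one] at hφ ⊢
  exact (Int.natCast_dvd_natCast.2 hu).trans hφ

lemma ConjDisjoint.prodMk {u v : G} {u' v' : H} (h : ConjDisjoint u v)
    (h' : ConjDisjoint u' v') : ConjDisjoint (u, u') (v, v') := fun i j hconj =>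
  Prod.ext (h i j ((MonoidHom.fst G H).map_isConj hconj))
    (h' i j ((MonoidHom.snd G H).map_isConj hconj))

lemma exists_lt_zpow_eq_pow_of_pow_eq_one {v : G} {n : ℕ} (hn : 0 < n) (hv : v ^ n = 1) (j : ℤ) :
    ∃ k < n, v ^ j = v ^ k := by
  have hn' : (0 : ℤ) < n := by exact_mod_cast hn
  obtain ⟨k, hk⟩ := Int.eq_ofNat_of_zero_le (Int.emod_nonneg j hn'.ne')
  refine ⟨k, by exact_mod_cast hk ▸ Int.emod_lt_of_pos j hn', ?_⟩
  rw [zpow_eq_zpow_emod' j hv, hk, zpow_natCast]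

lemma conjDisjoint_of_orderOf_eq_prime_pow {p k n : ℕ} (hp : p.Prime) {u v : G}
    (hu : orderOf u = p ^ (k + 1)) (hn : 0 < n) (hv : v ^ n = 1)
    (h : ∀ j < n, ¬ IsConj (u ^ p ^ k) (v ^ j)) : ConjDisjoint u v := by
  intro i j hconj
  by_contra hi
  obtain ⟨l, hl⟩ := exists_zpow_zpow_eq_of_orderOf_eq_prime_pow hp hu hi
  obtain ⟨g, hg⟩ := isConj_iff.1 hconj
  obtain ⟨m, hm, hjl⟩ := exists_lt_zpow_eq_pow_of_pow_eq_one hn hv (j * l)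
  refine h m hm (isConj_iff.2 ⟨g, ?_⟩)
  rw [← hl, ← conj_zpow, hg, ← zpow_mul, hjl]

lemma mem_sigmaSet_iff_s16 {x y z : G} :
    z ∈ SigmaSet x y ↔ ∃ u ∈ ({x, y, x * y} : Set G), ∃ i : ℤ, IsConj (u ^ i) z := by
  simp only [SigmaSet, Set.mem_iUnion, Set.mem_union, SetLike.mem_coe, mem_zpowers_iff, conj_zpow,
    Set.mem_insert_iff, Set.mem_singleton_iff, isConj_iff, exists_eq_or_imp, exists_eq_left,
    exists_or, or_assoc]
  rw [exists_comm, exists_comm (α := G) (p := fun g i => g * y ^ i * g⁻¹ = z),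
    exists_comm (α := G) (p := fun g i => g * (x * y) ^ i * g⁻¹ = z)]

lemma sigmaSet_inter_eq_one_iff {x₁ y₁ x₂ y₂ : G} :
    SigmaSet x₁ y₁ ∩ SigmaSet x₂ y₂ = {1} ↔
      ∀ u ∈ ({x₁, y₁, x₁ * y₁} : Set G), ∀ v ∈ ({x₂, y₂, x₂ * y₂} : Set G),
        ConjDisjoint u v := by
  have one_mem (x y : G) : 1 ∈ SigmaSet x y := mem_sigmaSet_iff_s16.2 ⟨x, by simp, 0, by simp⟩
  rw [Set.Subset.antisymm_iff, Set.singleton_subset_iff]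
  simp only [Set.mem_inter_iff, one_mem, and_self, and_true]
  constructor
  · intro h u hu v hv i j hconj
    exact h ⟨mem_sigmaSet_iff_s16.2 ⟨u, hu, i, .refl _⟩, mem_sigmaSet_iff_s16.2 ⟨v, hv, j, hconj.symm⟩⟩
  · rintro h z ⟨hz₁, hz₂⟩
    obtain ⟨u, hu, i, hi⟩ := mem_sigmaSet_iff_s16.1 hz₁
    obtain ⟨v, hv, j, hj⟩ := mem_sigmaSet_iff_s16.1 hz₂
    have hui : u ^ i = 1 := h u hu v hv i j (hi.trans hj.symm)
    exact isConj_one_right.1 (hui ▸ hi)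

lemma closure_pair_map_eq_top {φ : G →* H} (hφ : Function.Surjective φ) {x y : G}
    (h : closure {x, y} = ⊤) : closure {φ x, φ y} = ⊤ := by
  rw [← Set.image_pair, ← MonoidHom.map_closure, h, map_top_of_surjective φ hφ]

lemma closure_pair_eq_top_of_mem {x y x' y' : G} (h : closure {x, y} = ⊤)
    (hx : x ∈ closure {x', y'}) (hy : y ∈ closure {x', y'}) : closure {x', y'} = ⊤ := by
  rw [eq_top_iff, ← h, closure_le]
  exact Set.pair_subset hx hy

lemma mk_one_mem_of_coprime_card (hcop : (Nat.card G).Coprime (Nat.card H))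
    {K : Subgroup (G × H)} {g : G} {h : H} (hgh : (g, h) ∈ K) : (g, (1 : H)) ∈ K := by
  obtain ⟨m, hm⟩ :=
    exists_pow_eq_self_of_coprime (hcop.symm.coprime_dvd_right (orderOf_dvd_natCard g))
  have hpow : ((g, h) ^ Nat.card H) ^ m = (g, 1) :=
    Prod.ext hm (by simp only [Prod.pow_snd, pow_card_eq_one', one_pow])
  exact hpow ▸ pow_mem (pow_mem hgh _) m

lemma one_mk_mem_of_coprime_card (hcop : (Nat.card G).Coprime (Nat.card H))
    {K : Subgroup (G × H)} {g : G} {h : H} (hgh : (g, h) ∈ K) : ((1 : G), h) ∈ K := by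
  simpa using mul_mem (inv_mem (mk_one_mem_of_coprime_card hcop hgh)) hgh

lemma eq_prod_map_of_coprime_card (hcop : (Nat.card G).Coprime (Nat.card H))
    (K : Subgroup (G × H)) :
    K = (K.map (MonoidHom.fst G H)).prod (K.map (MonoidHom.snd G H)) := by
  refine le_antisymm (le_prod_iff.2 ⟨le_rfl, le_rfl⟩) ?_
  rintro ⟨g, h⟩ ⟨⟨⟨_, h'⟩, hg, rfl⟩, ⟨⟨g', _⟩, hh, rfl⟩⟩
  simpa using mul_mem (mk_one_mem_of_coprime_card hcop hg) (one_mk_mem_of_coprime_card hcop hh)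

lemma closure_pair_prodMk_eq_top (hcop : (Nat.card G).Coprime (Nat.card H)) {x y : G} {x' y' : H}
    (h : closure {x, y} = ⊤) (h' : closure {x', y'} = ⊤) :
    closure {(x, x'), (y, y')} = ⊤ := by
  rw [eq_prod_map_of_coprime_card hcop (closure _), MonoidHom.map_closure, MonoidHom.map_closure,
    Set.image_pair, Set.image_pair]
  exact (congrArg₂ Subgroup.prod h h').trans top_prod_top

lemma IsBeauvilleGroup.prod (hcop : (Nat.card G).Coprime (Nat.card H)) (hG : IsBeauvilleGroup G)
    (hH : IsBeauvilleGroup H) : IsBeauvilleGroup (G × H) := by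
  obtain ⟨x₁, y₁, x₂, y₂, hgen₁, hgen₂, hdisj⟩ := hG
  obtain ⟨x₁', y₁', x₂', y₂', hgen₁', hgen₂', hdisj'⟩ := hH
  refine ⟨(x₁, x₁'), (y₁, y₁'), (x₂, x₂'), (y₂, y₂'), closure_pair_prodMk_eq_top hcop hgen₁ hgen₁',
    closure_pair_prodMk_eq_top hcop hgen₂ hgen₂', ?_⟩
  rw [sigmaSet_inter_eq_one_iff] at hdisj hdisj' ⊢
  simp only [Set.forall_mem_insert, Set.mem_singleton_iff, forall_eq, Prod.mk_mul_mk]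
    at hdisj hdisj' ⊢
  obtain ⟨⟨hxx, hxy, hxz⟩, ⟨hyx, hyy, hyz⟩, ⟨hzx, hzy, hzz⟩⟩ := hdisj
  obtain ⟨⟨hxx', hxy', hxz'⟩, ⟨hyx', hyy', hyz'⟩, ⟨hzx', hzy', hzz'⟩⟩ := hdisj'
  exact ⟨⟨hxx.prodMk hxx', hxy.prodMk hxy', hxz.prodMk hxz'⟩,
    ⟨hyx.prodMk hyx', hyy.prodMk hyy', hyz.prodMk hyz'⟩,
    ⟨hzx.prodMk hzx', hzy.prodMk hzy', hzz.prodMk hzz'⟩⟩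

/-- `n` is the order of some Beauville group. -/
def IsBeauvilleOrder (n : ℕ) : Prop :=
  ∃ (G : Type) (_ : Group G), Finite G ∧ Nat.card G = n ∧ IsBeauvilleGroup G

lemma IsBeauvilleOrder.mul {m n : ℕ} (hcop : m.Coprime n) (hm : IsBeauvilleOrder m)
    (hn : IsBeauvilleOrder n) : IsBeauvilleOrder (m * n) := by
  obtain ⟨G, _, _, rfl, hG⟩ := hm
  obtain ⟨H, _, _, rfl, hH⟩ := hn
  exact ⟨G × H, inferInstance, inferInstance, Nat.card_prod G H, hG.prod hcop hH⟩

end General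

/-- The Heisenberg group over `R` with its centre pushed forward along `f : R →+* S`: the product
`R × R × S` with multiplication `(a, b, c) (a', b', c') = (a + a', b + b', c + c' + f (a b'))`. -/
@[ext]
structure Heisenberg {R S : Type*} [CommRing R] [CommRing S] (f : R →+* S) where
  a : R
  b : R
  c : S

namespace Heisenberg

variable {R S : Type*} [CommRing R] [CommRing S] {f : R →+* S}

instance : Mul (Heisenberg f) := ⟨fun u v => ⟨u.a + v.a, u.b + v.b, u.c + v.c + f (u.a * v.b)⟩⟩
instance : One (Heisenberg f) := ⟨⟨0, 0, 0⟩⟩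
instance : Inv (Heisenberg f) := ⟨fun u => ⟨-u.a, -u.b, -u.c + f (u.a * u.b)⟩⟩

@[simp] lemma mul_a (u v : Heisenberg f) : (u * v).a = u.a + v.a := rfl
@[simp] lemma mul_b (u v : Heisenberg f) : (u * v).b = u.b + v.b := rfl
@[simp] lemma mul_c (u v : Heisenberg f) : (u * v).c = u.c + v.c + f (u.a * v.b) := rfl
@[simp] lemma one_a : (1 : Heisenberg f).a = 0 := rfl
@[simp] lemma one_b : (1 : Heisenberg f).b = 0 := rfl
@[simp] lemma one_c : (1 : Heisenberg f).c = 0 := rfl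
@[simp] lemma inv_a (u : Heisenberg f) : u⁻¹.a = -u.a := rfl
@[simp] lemma inv_b (u : Heisenberg f) : u⁻¹.b = -u.b := rfl
@[simp] lemma inv_c (u : Heisenberg f) : u⁻¹.c = -u.c + f (u.a * u.b) := rfl

instance : Group (Heisenberg f) where
  mul_assoc u v w := by ext <;> simp only [mul_a, mul_b, mul_c, map_add, map_mul] <;> ring
  one_mul u := by ext <;> simp
  mul_one u := by ext <;> simp
  inv_mul_cancel u := by ext <;> simp

/-- The underlying set of coordinates. -/
def equivProd (f : R →+* S) : Heisenberg f ≃ R × R × S where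
  toFun u := (u.a, u.b, u.c)
  invFun t := ⟨t.1, t.2.1, t.2.2⟩

lemma natCard_eq (f : R →+* S) : Nat.card (Heisenberg f) = Nat.card R ^ 2 * Nat.card S := by
  rw [Nat.card_congr (equivProd f), Nat.card_prod, Nat.card_prod]
  ring

/-- The quotient map by the central coordinate. -/
def toProd (f : R →+* S) : Heisenberg f →* Multiplicative (R × R) where
  toFun u := .ofAdd (u.a, u.b)
  map_one' := rfl
  map_mul' _ _ := rfl

lemma pow_eq (u : Heisenberg f) (n : ℕ) :
    u ^ n = ⟨n * u.a, n * u.b, n * u.c + n.choose 2 * f (u.a * u.b)⟩ := by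
  induction n with
  | zero => ext <;> simp
  | succ n ih =>
    rw [pow_succ, ih, Nat.choose_succ_succ' n 1, Nat.choose_one_right]
    ext <;> simp only [mul_a, mul_b, mul_c, map_mul, map_natCast] <;> push_cast <;> ring

lemma pow_eq_one_of_odd {n : ℕ} (hn : Odd n) (hnR : (n : R) = 0) (u : Heisenberg f) :
    u ^ n = 1 := by
  have hnS : (n : S) = 0 := by rw [← map_natCast f, hnR, map_zero]
  have hchoose : ((n.choose 2 : ℕ) : S) = 0 := by
    obtain ⟨m, rfl⟩ := hn
    have hfactor : (2 * m + 1).choose 2 = (2 * m + 1) * m := by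
      rw [Nat.choose_two_right, Nat.add_sub_cancel, mul_left_comm,
        Nat.mul_div_cancel_left _ two_pos]
    rw [hfactor, Nat.cast_mul, hnS, zero_mul]
  rw [pow_eq, hnR, hnS, hchoose]
  ext <;> simp

/-- Conjugate elements have the same image in `R × R`, where linear independence of the images of
`u` and `v` forces the exponent of `u` to vanish. -/
lemma conjDisjoint_of_isUnit_det {n : ℕ} [CharP R n] (hn : Odd n) {u v : Heisenberg f}
    (hdet : IsUnit (u.a * v.b - u.b * v.a)) : ConjDisjoint u v := by
  intro i j hconj
  have himage : ((i * u.a, i * u.b) : R × R) = (j * v.a, j * v.b) := by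
    have := congrArg Multiplicative.toAdd (isConj_iff_eq.1 ((toProd f).map_isConj hconj))
    simpa [toProd, map_zpow, ← zsmul_eq_mul] using this
  obtain ⟨ha, hb⟩ := Prod.ext_iff.1 himage
  have hi : (i : R) = 0 := by
    refine hdet.mul_left_eq_zero.1 ?_
    linear_combination v.b * ha - v.a * hb
  obtain ⟨m, rfl⟩ := (CharP.intCast_eq_zero_iff R n i).1 hi
  rw [zpow_mul, zpow_natCast, pow_eq_one_of_odd hn (CharP.cast_eq_zero R n), one_zpow]

section ZMod

variable {n : ℕ} {f : ZMod n →+* S}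

lemma closure_standard_pair_eq_top [NeZero n] (hf : Function.Surjective f) :
    closure {(⟨1, 0, 0⟩ : Heisenberg f), ⟨0, 1, 0⟩} = ⊤ := by
  set x : Heisenberg f := ⟨1, 0, 0⟩
  set y : Heisenberg f := ⟨0, 1, 0⟩
  have hx : x ∈ closure {x, y} := subset_closure (by simp)
  have hy : y ∈ closure {x, y} := subset_closure (by simp)
  have hz : x * y * x⁻¹ * y⁻¹ ∈ closure {x, y} :=
    mul_mem (mul_mem (mul_mem hx hy) (inv_mem hx)) (inv_mem hy)
  refine eq_top_iff.2 ?_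
  rintro ⟨a, b, c⟩ -
  obtain ⟨i, rfl⟩ := ZMod.natCast_zmod_surjective a
  obtain ⟨j, rfl⟩ := ZMod.natCast_zmod_surjective b
  obtain ⟨c, rfl⟩ := hf c
  obtain ⟨k, rfl⟩ := ZMod.natCast_zmod_surjective c
  have hnormal : (⟨i, j, f k⟩ : Heisenberg f) = y ^ j * x ^ i * (x * y * x⁻¹ * y⁻¹) ^ k := by
    rw [pow_eq, pow_eq, pow_eq]
    ext <;> simp [x, y]
  rw [hnormal]
  exact mul_mem (mul_mem (pow_mem hy _) (pow_mem hx _)) (pow_mem hz _)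

lemma closure_twisted_pair_eq_top {x y : Heisenberg f} (hn : Odd n) (hn3 : Nat.Coprime 3 n)
    (hgen : closure {x, y} = ⊤) : closure {x * y ^ 2, x * y⁻¹} = ⊤ := by
  have hfst : x * y ^ 2 ∈ closure {x * y ^ 2, x * y⁻¹} := subset_closure (by simp)
  have hsnd : x * y⁻¹ ∈ closure {x * y ^ 2, x * y⁻¹} := subset_closure (by simp)
  have hy3 : y ^ 3 ∈ closure {x * y ^ 2, x * y⁻¹} := by
    convert mul_mem (inv_mem hsnd) hfst using 1
    group
  have hy : y ∈ closure {x * y ^ 2, x * y⁻¹} := by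
    have hord : orderOf y ∣ n :=
      orderOf_dvd_of_pow_eq_one (pow_eq_one_of_odd hn (ZMod.natCast_self n) y)
    obtain ⟨m, hm⟩ := exists_pow_eq_self_of_coprime (hn3.coprime_dvd_right hord)
    have hpow := pow_mem hy3 m
    rwa [hm] at hpow
  have hx : x ∈ closure {x * y ^ 2, x * y⁻¹} := by simpa using mul_mem hsnd hy
  exact closure_pair_eq_top_of_mem hgen hx hy

lemma isBeauvilleGroup (hn : n.Coprime 6) (hf : Function.Surjective f) :
    IsBeauvilleGroup (Heisenberg f) := by
  have hn2 : Nat.Coprime 2 n := (hn.coprime_dvd_right (by norm_num)).symm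
  have hn3 : Nat.Coprime 3 n := (hn.coprime_dvd_right (by norm_num)).symm
  have hodd : Odd n := Nat.coprime_two_left.1 hn2
  have : NeZero n := ⟨hodd.pos.ne'⟩
  have hunit : IsUnit (2 : ZMod n) := by
    simpa using (ZMod.isUnit_iff_coprime 2 n).2 hn2
  have hgen := closure_standard_pair_eq_top hf
  refine ⟨_, _, _, _, hgen, closure_twisted_pair_eq_top hodd hn3 hgen,
    sigmaSet_inter_eq_one_iff.2 ?_⟩
  rintro u (rfl | rfl | rfl) v (rfl | rfl | rfl) <;>
    refine conjDisjoint_of_isUnit_det hodd ?_ <;>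
    simp only [mul_a, mul_b, inv_a, inv_b, pow_two] <;> ring_nf <;>
    first | exact isUnit_one | exact isUnit_one.neg | exact hunit | exact hunit.neg

end ZMod

end Heisenberg

lemma isBeauvilleOrder_sq_mul_of_dvd {k e : ℕ} (hk : k.Coprime 6) (he : e ∣ k) :
    IsBeauvilleOrder (k ^ 2 * e) := by
  have hcard : Nat.card (Heisenberg (ZMod.castHom he (ZMod e))) = k ^ 2 * e := by
    rw [Heisenberg.natCard_eq, Nat.card_zmod, Nat.card_zmod]
  have hk0 : k ≠ 0 := by rintro rfl; norm_num at hk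
  have hcard0 : k ^ 2 * e ≠ 0 := mul_ne_zero (pow_ne_zero 2 hk0) (ne_zero_of_dvd_ne_zero hk0 he)
  exact ⟨_, inferInstance, Nat.finite_of_card_ne_zero (hcard ▸ hcard0), hcard,
    Heisenberg.isBeauvilleGroup hk (ZMod.castHom_surjective he)⟩

lemma isBeauvilleOrder_pow_of_coprime_six {m n : ℕ} (hm : m.Coprime 6) (hn : 2 ≤ n) :
    IsBeauvilleOrder (m ^ n) := by
  have hexp : m ^ n = (m ^ (n / 2)) ^ 2 * m ^ (n % 2) := by
    rw [← pow_mul, ← pow_add, Nat.div_add_mod']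
  rw [hexp]
  exact isBeauvilleOrder_sq_mul_of_dvd (hm.pow_left _) (pow_dvd_pow m (by omega))

section PGroup

variable {G : Type*} [Group G] [Finite G] {p : ℕ} [Fact p.Prime]

lemma exists_mem_center_orderOf_eq_prime (hG : IsPGroup p G) {N : Subgroup G} [N.Normal]
    (hN : N ≠ ⊥) : ∃ z ∈ N, z ∈ center G ∧ orderOf z = p := by
  have : Nontrivial N := (Subgroup.nontrivial_iff_ne_bot N).2 hN
  obtain ⟨n, hn, hcard⟩ := (hG.to_subgroup N).nontrivial_iff_card.1 this
  have hConjAct : IsPGroup p (ConjAct G) := hG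
  obtain ⟨w, hw_fixed, hw_ne⟩ :=
    hConjAct.exists_fixed_point_of_prime_dvd_card_of_fixed_point (α := N)
      (hcard ▸ dvd_pow_self p hn.ne') (a := 1) fun g => by simp
  have hw_center : (w : G) ∈ center G := by
    refine mem_center_iff.2 fun g => ?_
    have hfix := congrArg Subtype.val (hw_fixed (ConjAct.toConjAct g))
    rw [ConjAct.Subgroup.val_conj_smul, ConjAct.toConjAct_smul] at hfix
    exact mul_inv_eq_iff_eq_mul.1 hfix
  have hp_dvd : p ∣ orderOf (w : G) :=
    hG.dvd_orderOf fun h => hw_ne (Subtype.ext h.symm)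
  exact ⟨w ^ (orderOf (w : G) / p), pow_mem w.2 _, pow_mem hw_center _,
    orderOf_pow_orderOf_div (orderOf_pos _).ne' hp_dvd⟩

lemma zpowers_normal_of_mem_center {G : Type*} [Group G] {z : G} (hz : z ∈ center G) :
    (zpowers z).Normal := by
  refine ⟨fun w hw g => ?_⟩
  have hw_center : w ∈ center G := (zpowers_le.2 hz) hw
  rwa [mem_center_iff.1 hw_center g, mul_inv_cancel_right]

lemma exists_normal_le_natCard_eq_prime_pow (hG : IsPGroup p G) (N : Subgroup G) [N.Normal]
    {k : ℕ} (hk : p ^ k ≤ Nat.card N) : ∃ K ≤ N, K.Normal ∧ Nat.card K = p ^ k := by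
  have hp : p.Prime := Fact.out
  induction k with
  | zero => exact ⟨⊥, bot_le, inferInstance, by simp⟩
  | succ k ih =>
    obtain ⟨K, hKN, hK, hcard⟩ := ih ((Nat.pow_le_pow_right hp.pos k.le_succ).trans hk)
    have hmap : N.map (QuotientGroup.mk' K) ≠ ⊥ := by
      rw [Ne, Subgroup.map_eq_bot_iff, QuotientGroup.ker_mk']
      intro hNK
      have := hk.trans (card_le_of_le hNK)
      rw [hcard] at this
      exact this.not_gt (Nat.pow_lt_pow_succ hp.one_lt)
    have := Normal.map ‹N.Normal› _ (QuotientGroup.mk'_surjective K)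
    obtain ⟨z, hzN, hz_center, hz_order⟩ :=
      exists_mem_center_orderOf_eq_prime (hG.to_quotient K) hmap
    have := zpowers_normal_of_mem_center hz_center
    refine ⟨(zpowers z).comap (QuotientGroup.mk' K), ?_, inferInstance, ?_⟩
    · calc (zpowers z).comap (QuotientGroup.mk' K)
          ≤ (N.map (QuotientGroup.mk' K)).comap (QuotientGroup.mk' K) :=
            comap_mono (zpowers_le.2 hzN)
        _ = N := by
            rw [comap_map_eq, QuotientGroup.ker_mk', sup_eq_left.2 hKN]
    · have := QuotientGroup.card_preimage_mk K (zpowers z : Set (G ⧸ K))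
      rw [hcard] at this
      exact this.trans (by rw [SetLike.coe_sort_coe, Nat.card_zpowers, hz_order, pow_succ])

lemma isPGroup_semidirectProduct {H : Type*} [Group H] [Finite H] {φ : H →* MulAut G}
    (hG : IsPGroup p G) (hH : IsPGroup p H) : IsPGroup p (G ⋊[φ] H) := by
  obtain ⟨m, hm⟩ := hG.exists_card_eq
  obtain ⟨n, hn⟩ := hH.exists_card_eq
  exact .of_card (n := m + n) (by rw [SemidirectProduct.card, hm, hn, pow_add])

end PGroup

/-- The group of order `3 ^ 5` with two generators `x`, `y` of order `3` that is universal among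
those of nilpotency class `3`, i.e. `C₃ * C₃` modulo the fourth term of its lower central series.
The coordinates are the exponents of the normal form
`x ^ a y ^ b [y,x] ^ c [y,x,x] ^ d [y,x,y] ^ e`, and the multiplication is obtained by collecting
with
`y ^ b x ^ a = x ^ a y ^ b [y,x] ^ (a b) [y,x,x] ^ (b * choose a 2) [y,x,y] ^ (a * choose b 2)`,
where `choose a 2 = a (1 - a)` modulo `3`. -/
@[ext]
structure ClassThreeGroup where
  a : ZMod 3
  b : ZMod 3
  c : ZMod 3
  d : ZMod 3
  e : ZMod 3

namespace ClassThreeGroup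

instance : Mul ClassThreeGroup := ⟨fun u v => ⟨u.a + v.a, u.b + v.b, u.c + v.c + v.a * u.b,
  u.d + v.d + u.c * v.a + u.b * (v.a * (1 - v.a)),
  u.e + v.e + u.c * v.b + v.a * u.b * v.b + v.a * (u.b * (1 - u.b))⟩⟩
instance : One ClassThreeGroup := ⟨⟨0, 0, 0, 0, 0⟩⟩
instance : Inv ClassThreeGroup := ⟨fun u => ⟨-u.a, -u.b, -u.c + u.a * u.b,
  -u.d + u.c * u.a - 2 * u.a * u.a * u.b + u.a * u.b,
  -u.e + u.c * u.b + u.a * u.b + u.a * u.b * u.b⟩⟩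

@[simp] lemma mul_a (u v : ClassThreeGroup) : (u * v).a = u.a + v.a := rfl
@[simp] lemma mul_b (u v : ClassThreeGroup) : (u * v).b = u.b + v.b := rfl
@[simp] lemma mul_c (u v : ClassThreeGroup) : (u * v).c = u.c + v.c + v.a * u.b := rfl
@[simp] lemma mul_d (u v : ClassThreeGroup) :
    (u * v).d = u.d + v.d + u.c * v.a + u.b * (v.a * (1 - v.a)) := rfl
@[simp] lemma mul_e (u v : ClassThreeGroup) : (u * v).e =
    u.e + v.e + u.c * v.b + v.a * u.b * v.b + v.a * (u.b * (1 - u.b)) := rfl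
@[simp] lemma one_a : (1 : ClassThreeGroup).a = 0 := rfl
@[simp] lemma one_b : (1 : ClassThreeGroup).b = 0 := rfl
@[simp] lemma one_c : (1 : ClassThreeGroup).c = 0 := rfl
@[simp] lemma one_d : (1 : ClassThreeGroup).d = 0 := rfl
@[simp] lemma one_e : (1 : ClassThreeGroup).e = 0 := rfl
@[simp] lemma inv_a (u : ClassThreeGroup) : u⁻¹.a = -u.a := rfl
@[simp] lemma inv_b (u : ClassThreeGroup) : u⁻¹.b = -u.b := rfl
@[simp] lemma inv_c (u : ClassThreeGroup) : u⁻¹.c = -u.c + u.a * u.b := rfl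
@[simp] lemma inv_d (u : ClassThreeGroup) :
    u⁻¹.d = -u.d + u.c * u.a - 2 * u.a * u.a * u.b + u.a * u.b := rfl
@[simp] lemma inv_e (u : ClassThreeGroup) :
    u⁻¹.e = -u.e + u.c * u.b + u.a * u.b + u.a * u.b * u.b := rfl

instance : Group ClassThreeGroup where
  mul_assoc u v w := by
    have three_eq_zero : (3 : ZMod 3) = 0 := rfl
    ext <;> simp only [mul_a, mul_b, mul_c, mul_d, mul_e]
    · ring
    · ring
    · ring
    · linear_combination (u.b * v.a * w.a) * three_eq_zero
    · linear_combination (-w.a * u.b * v.b) * three_eq_zero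
  one_mul u := by ext <;> simp
  mul_one u := by ext <;> simp
  inv_mul_cancel u := by
    ext <;> simp only [mul_a, mul_b, mul_c, mul_d, mul_e, inv_a, inv_b, inv_c, inv_d, inv_e,
      one_a, one_b, one_c, one_d, one_e] <;> ring

/-- The exponents in the normal form. -/
def equivProd : ClassThreeGroup ≃ ZMod 3 × ZMod 3 × ZMod 3 × ZMod 3 × ZMod 3 where
  toFun u := (u.a, u.b, u.c, u.d, u.e)
  invFun t := ⟨t.1, t.2.1, t.2.2.1, t.2.2.2.1, t.2.2.2.2⟩

lemma natCard_eq : Nat.card ClassThreeGroup = 3 ^ 5 := by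
  rw [Nat.card_congr equivProd]
  simp

instance : Finite ClassThreeGroup := .of_equiv _ equivProd.symm
instance : DecidableEq ClassThreeGroup := equivProd.decidableEq

/-- The first standard generator. -/
def X : ClassThreeGroup := ⟨1, 0, 0, 0, 0⟩

/-- The second standard generator. -/
def Y : ClassThreeGroup := ⟨0, 1, 0, 0, 0⟩

lemma X_pow_three : X ^ 3 = 1 := by decide

lemma Y_pow_three : Y ^ 3 = 1 := by decide

lemma X_mul_Y_pow_nine : (X * Y) ^ 9 = 1 := by decide

lemma orderOf_X : orderOf X = 3 := orderOf_eq_prime X_pow_three (by decide)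

lemma orderOf_Y : orderOf Y = 3 := orderOf_eq_prime Y_pow_three (by decide)

lemma orderOf_X_mul_Y : orderOf (X * Y) = 3 ^ (1 + 1) :=
  orderOf_eq_prime_pow (by decide) X_mul_Y_pow_nine

lemma eq_of_isConj_X {w : ClassThreeGroup} (h : IsConj X w) :
    w.a = 1 ∧ w.b = 0 ∧ w.e = w.c - 2 * w.c ^ 2 := by
  obtain ⟨g, hg⟩ := isConj_iff.1 h
  have hw : w = ⟨1, 0, g.b, g.c - g.b * g.a, g.b - 2 * g.b ^ 2⟩ := by
    rw [← hg, mul_inv_eq_iff_eq_mul]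
    ext <;> simp only [X, mul_a, mul_b, mul_c, mul_d, mul_e] <;> ring
  simp [hw]

lemma eq_of_isConj_Y {w : ClassThreeGroup} (h : IsConj Y w) :
    w.a = 0 ∧ w.b = 1 ∧ w.d = w.c + 2 * w.c ^ 2 := by
  obtain ⟨g, hg⟩ := isConj_iff.1 h
  have hw : w = ⟨0, 1, -g.a, -g.a + 2 * g.a ^ 2, g.c⟩ := by
    rw [← hg, mul_inv_eq_iff_eq_mul]
    ext <;> simp only [Y, mul_a, mul_b, mul_c, mul_d, mul_e] <;> ring
  simp [hw]

lemma eq_of_isConj_X_mul_Y_pow_three {w : ClassThreeGroup} (h : IsConj ((X * Y) ^ 3) w) :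
    w = (X * Y) ^ 3 := by
  obtain ⟨g, hg⟩ := isConj_iff.1 h
  have hpow : (X * Y) ^ 3 = ⟨0, 0, 0, 1, 2⟩ := by decide
  rw [← hg, mul_inv_eq_iff_eq_mul, hpow]
  ext <;> simp only [mul_a, mul_b, mul_c, mul_d, mul_e] <;> ring

lemma conjDisjoint_X {v : ClassThreeGroup} (hv : v ^ 9 = 1)
    (h : ∀ j < 9, (v ^ j).a = 1 → (v ^ j).b = 0 → (v ^ j).e ≠ (v ^ j).c - 2 * (v ^ j).c ^ 2) :
    ConjDisjoint X v := by
  refine conjDisjoint_of_orderOf_eq_prime_pow (k := 0) Nat.prime_three orderOf_X (by norm_num) hv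
    fun j hj hconj => ?_
  obtain ⟨ha, hb, he⟩ := eq_of_isConj_X (by simpa using hconj)
  exact h j hj ha hb he

lemma conjDisjoint_Y {v : ClassThreeGroup} (hv : v ^ 9 = 1)
    (h : ∀ j < 9, (v ^ j).a = 0 → (v ^ j).b = 1 → (v ^ j).d ≠ (v ^ j).c + 2 * (v ^ j).c ^ 2) :
    ConjDisjoint Y v := by
  refine conjDisjoint_of_orderOf_eq_prime_pow (k := 0) Nat.prime_three orderOf_Y (by norm_num) hv
    fun j hj hconj => ?_
  obtain ⟨ha, hb, hd⟩ := eq_of_isConj_Y (by simpa using hconj)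
  exact h j hj ha hb hd

lemma conjDisjoint_X_mul_Y {v : ClassThreeGroup} (hv : v ^ 9 = 1)
    (h : ∀ j < 9, v ^ j ≠ (X * Y) ^ 3) : ConjDisjoint (X * Y) v :=
  conjDisjoint_of_orderOf_eq_prime_pow (k := 1) Nat.prime_three orderOf_X_mul_Y (by norm_num) hv
    fun j hj hconj => h j hj (eq_of_isConj_X_mul_Y_pow_three hconj)

lemma conjDisjoint_twisted_pair : ∀ u ∈ ({X, Y, X * Y} : Set ClassThreeGroup),
    ∀ v ∈ ({X⁻¹ * Y, X⁻¹ * Y * X * Y, X⁻¹ * Y * (X⁻¹ * Y * X * Y)} : Set ClassThreeGroup),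
      ConjDisjoint u v := by
  rintro u (rfl | rfl | rfl) v hv
  · refine conjDisjoint_X ?_ ?_ <;> rcases hv with rfl | rfl | rfl <;> decide
  · refine conjDisjoint_Y ?_ ?_ <;> rcases hv with rfl | rfl | rfl <;> decide
  · refine conjDisjoint_X_mul_Y ?_ ?_ <;> rcases hv with rfl | rfl | rfl <;> decide

end ClassThreeGroup

/-- A presentation of `G` as a quotient of the triangle group `Δ(3, 3, 9)` lying over
`ClassThreeGroup`: generators `x`, `y` with `x ^ 3 = y ^ 3 = (x y) ^ 9 = 1` and a homomorphism to
`ClassThreeGroup` carrying them to the standard generators. -/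
structure TriangleCover (G : Type*) [Group G] where
  x : G
  y : G
  toHom : G →* ClassThreeGroup
  closure_eq_top : closure {x, y} = ⊤
  x_pow_three : x ^ 3 = 1
  y_pow_three : y ^ 3 = 1
  x_mul_y_pow_nine : (x * y) ^ 9 = 1
  map_x : toHom x = .X
  map_y : toHom y = .Y

namespace TriangleCover

variable {G : Type*} [Group G]

lemma closure_twisted_pair_eq_top (T : TriangleCover G) :
    closure {T.x⁻¹ * T.y, T.x⁻¹ * T.y * T.x * T.y} = ⊤ := by
  obtain ⟨x, y, -, hgen, hx3, -, -, -, -⟩ := T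
  dsimp only
  have hfst : x⁻¹ * y ∈ closure {x⁻¹ * y, x⁻¹ * y * x * y} := subset_closure (by simp)
  have hsnd : x⁻¹ * y * x * y ∈ closure {x⁻¹ * y, x⁻¹ * y * x * y} := subset_closure (by simp)
  have hxy : x * y ∈ closure {x⁻¹ * y, x⁻¹ * y * x * y} := by
    convert mul_mem (inv_mem hfst) hsnd using 1
    group
  have hx_inv : x⁻¹ ∈ closure {x⁻¹ * y, x⁻¹ * y * x * y} := by
    convert mul_mem hxy (inv_mem hfst) using 1
    calc x⁻¹ = x * x := inv_eq_of_mul_eq_one_left (by rw [← hx3, pow_succ, pow_two])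
      _ = x * y * (x⁻¹ * y)⁻¹ := by group
  have hx : x ∈ closure {x⁻¹ * y, x⁻¹ * y * x * y} := inv_mem_iff.1 hx_inv
  have hy : y ∈ closure {x⁻¹ * y, x⁻¹ * y * x * y} := by simpa using mul_mem hx hfst
  exact closure_pair_eq_top_of_mem hgen hx hy

lemma orderOf_dvd_orderOf_map (T : TriangleCover G) :
    ∀ u ∈ ({T.x, T.y, T.x * T.y} : Set G), orderOf u ∣ orderOf (T.toHom u) := by
  rintro u (rfl | rfl | rfl)
  · rw [T.map_x, ClassThreeGroup.orderOf_X]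
    exact orderOf_dvd_of_pow_eq_one T.x_pow_three
  · rw [T.map_y, ClassThreeGroup.orderOf_Y]
    exact orderOf_dvd_of_pow_eq_one T.y_pow_three
  · rw [map_mul, T.map_x, T.map_y, ClassThreeGroup.orderOf_X_mul_Y]
    exact orderOf_dvd_of_pow_eq_one T.x_mul_y_pow_nine

lemma isBeauvilleGroup (T : TriangleCover G) : IsBeauvilleGroup G := by
  refine ⟨_, _, _, _, T.closure_eq_top, T.closure_twisted_pair_eq_top,
    sigmaSet_inter_eq_one_iff.2 fun u hu v hv => ?_⟩
  refine ConjDisjoint.of_map T.toHom (T.orderOf_dvd_orderOf_map u hu)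
    (ClassThreeGroup.conjDisjoint_twisted_pair _ ?_ _ ?_)
  · rcases hu with rfl | rfl | rfl <;> simp [T.map_x, T.map_y]
  · rcases hv with rfl | rfl | rfl <;> simp [T.map_x, T.map_y]

/-- The cover induced on the quotient by a normal subgroup of the kernel. -/
def quotient (T : TriangleCover G) (K : Subgroup G) [K.Normal] (hK : K ≤ T.toHom.ker) :
    TriangleCover (G ⧸ K) where
  x := T.x
  y := T.y
  toHom := QuotientGroup.lift K T.toHom hK
  closure_eq_top := closure_pair_map_eq_top (QuotientGroup.mk'_surjective K) T.closure_eq_top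
  x_pow_three := congrArg (QuotientGroup.mk' K) T.x_pow_three
  y_pow_three := congrArg (QuotientGroup.mk' K) T.y_pow_three
  x_mul_y_pow_nine := congrArg (QuotientGroup.mk' K) T.x_mul_y_pow_nine
  map_x := T.map_x
  map_y := T.map_y

lemma isBeauvilleOrder_three_pow {G : Type} [Group G] (T : TriangleCover G) {N n : ℕ}
    (hcard : Nat.card G = 3 ^ N) (hn : 5 ≤ n) (hnN : n ≤ N) : IsBeauvilleOrder (3 ^ n) := by
  have : Fact (Nat.Prime 3) := ⟨Nat.prime_three⟩
  have : Finite G := Nat.finite_of_card_ne_zero (by rw [hcard]; positivity)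
  have hker : 3 ^ (N - n) ≤ Nat.card T.toHom.ker := by
    have hindex : T.toHom.ker.index ≤ 3 ^ n := by
      rw [index_ker]
      exact (T.toHom.range.card_le_card_group.trans_eq ClassThreeGroup.natCard_eq).trans
        (Nat.pow_le_pow_right three_pos hn)
    refine Nat.le_of_mul_le_mul_right ?_ (pow_pos three_pos n)
    calc 3 ^ (N - n) * 3 ^ n = Nat.card T.toHom.ker * T.toHom.ker.index := by
          rw [pow_sub_mul_pow 3 hnN, card_mul_index, hcard]
      _ ≤ Nat.card T.toHom.ker * 3 ^ n := Nat.mul_le_mul_left _ hindex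
  obtain ⟨K, hK_le, hK_normal, hK_card⟩ :=
    exists_normal_le_natCard_eq_prime_pow (.of_card hcard) T.toHom.ker hker
  refine ⟨G ⧸ K, inferInstance, inferInstance, ?_, (T.quotient K hK_le).isBeauvilleGroup⟩
  have hquot := K.card_eq_card_quotient_mul_card_subgroup
  rw [hcard, hK_card, ← pow_mul_pow_sub 3 hnN] at hquot
  exact (Nat.eq_of_mul_eq_mul_right (pow_pos three_pos _) hquot).symm

/-- The cover of `ClassThreeGroup` generated by `(a, X)` and `(b, Y)`. -/
def ofPair {A : Type*} [Group A] {a b : A} (ha : a ^ 3 = 1) (hb : b ^ 3 = 1)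
    (hab : (a * b) ^ 9 = 1) :
    TriangleCover (closure {(a, ClassThreeGroup.X), (b, ClassThreeGroup.Y)}) where
  x := ⟨(a, .X), subset_closure (by simp)⟩
  y := ⟨(b, .Y), subset_closure (by simp)⟩
  toHom := (MonoidHom.snd A ClassThreeGroup).comp (Subgroup.subtype _)
  closure_eq_top := by
    convert closure_closure_coe_preimage (k := {(a, ClassThreeGroup.X), (b, ClassThreeGroup.Y)})
    ext z
    simp [Subtype.ext_iff]
  x_pow_three := Subtype.ext (Prod.ext ha ClassThreeGroup.X_pow_three)
  y_pow_three := Subtype.ext (Prod.ext hb ClassThreeGroup.Y_pow_three)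
  x_mul_y_pow_nine := Subtype.ext (Prod.ext hab ClassThreeGroup.X_mul_Y_pow_nine)
  map_x := rfl
  map_y := rfl

lemma orderOf_dvd_natCard_closure {A : Type*} [Group A] (a b : A) :
    orderOf (b * a⁻¹) ∣
      Nat.card (closure {(a, ClassThreeGroup.X), (b, ClassThreeGroup.Y)}) := by
  have hmem : (b * a⁻¹, ClassThreeGroup.Y * ClassThreeGroup.X⁻¹) ∈
      closure {(a, ClassThreeGroup.X), (b, ClassThreeGroup.Y)} :=
    mul_mem (subset_closure (by simp) : (b, ClassThreeGroup.Y) ∈ _)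
      (inv_mem (subset_closure (by simp) : (a, ClassThreeGroup.X) ∈ _))
  refine dvd_trans ?_ (orderOf_dvd_natCard _ hmem)
  exact orderOf_map_dvd (MonoidHom.fst A ClassThreeGroup) _

end TriangleCover

/-- The group of maps `z ↦ u z + t` of `R` with linear part `u` in `U`, in which `⟨t, u⟩` is the map
above. -/
abbrev AffineGroup {R : Type*} [CommRing R] (U : Subgroup Rˣ) : Type _ :=
  Multiplicative R ⋊[((MulAutMultiplicative R).symm.toMonoidHom.comp AddAut.mulLeft).comp U.subtype]
    U

namespace AffineGroup

variable {R : Type*} [CommRing R] {U : Subgroup Rˣ}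

lemma pow_three_eq_one {s : AffineGroup U}
    (hs : s.right.val.val ^ 2 + s.right.val.val + 1 = 0) : s ^ 3 = 1 := by
  obtain ⟨t, u⟩ := s
  dsimp only at hs
  rw [pow_succ, pow_two]
  ext
  · apply Multiplicative.toAdd.injective
    change t.toAdd + u.val.val * t.toAdd + u.val.val * u.val.val * t.toAdd = 0
    linear_combination t.toAdd * hs
  · change u.val.val * u.val.val * u.val.val = 1
    linear_combination (u.val.val - 1) * hs

lemma mk_mul_mk_inv (t : R) (u : U) :
    (⟨.ofAdd t, u⟩ : AffineGroup U) * ⟨1, u⟩⁻¹ = SemidirectProduct.inl (.ofAdd t) := by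
  rw [mul_inv_eq_iff_eq_mul]
  exact SemidirectProduct.mk_eq_inl_mul_inr u (Multiplicative.ofAdd t)

end AffineGroup

lemma exists_three_group_pair_of_cube_root {R : Type} [CommRing R] [Finite R]
    (hR : IsPGroup 3 (Multiplicative R)) {ω : R} (hω : ω ^ 2 + ω + 1 = 0) :
    ∃ (A : Type) (_ : Group A) (a b : A), Finite A ∧ IsPGroup 3 A ∧
      a ^ 3 = 1 ∧ b ^ 3 = 1 ∧ (a * b) ^ 3 = 1 ∧ orderOf (b * a⁻¹) = addOrderOf (1 : R) := by
  have : Fact (Nat.Prime 3) := ⟨Nat.prime_three⟩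
  have hω3 : ω ^ 3 = 1 := by linear_combination (ω - 1) * hω
  let ζ : rootsOfUnity 3 R := rootsOfUnity.mkOfPowEq ω hω3
  have hU : IsPGroup 3 (rootsOfUnity 3 R) := fun u => ⟨1, Subtype.ext u.2⟩
  refine ⟨AffineGroup (rootsOfUnity 3 R), inferInstance, ⟨1, ζ⟩, ⟨.ofAdd 1, ζ⟩,
    .of_equiv _ SemidirectProduct.equivProd.symm, isPGroup_semidirectProduct hR hU,
    AffineGroup.pow_three_eq_one hω, AffineGroup.pow_three_eq_one hω,
    AffineGroup.pow_three_eq_one ?_, ?_⟩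
  · change (ω * ω) ^ 2 + ω * ω + 1 = 0
    linear_combination (ω ^ 2 - ω + 1) * hω
  · rw [AffineGroup.mk_mul_mk_inv, orderOf_injective _ SemidirectProduct.inl_injective,
      orderOf_ofAdd_eq_addOrderOf]

open QuadraticAlgebra in
lemma exists_triangleCover_natCard_eq_three_pow (k : ℕ) : ∃ (G : Type) (_ : Group G) (N : ℕ),
    Nat.card G = 3 ^ N ∧ k ≤ N ∧ Nonempty (TriangleCover G) := by
  have : Fact (Nat.Prime 3) := ⟨Nat.prime_three⟩
  let R := QuadraticAlgebra (ZMod (3 ^ k)) (-1) (-1)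
  have : CharP R (3 ^ k) := charP_of_injective_algebraMap algebraMap_injective (3 ^ k)
  have : Finite R := .of_equiv _ (equivProd _ _).symm
  have hR : IsPGroup 3 (Multiplicative R) := fun r => ⟨k, by
    apply Multiplicative.toAdd.injective
    rw [toAdd_pow, nsmul_eq_mul, CharP.cast_eq_zero, zero_mul, toAdd_one]⟩
  have hω : (ω : R) ^ 2 + ω + 1 = 0 := by
    rw [sq, omega_mul_omega_eq_mk]
    ext <;> simp
  obtain ⟨A, _, a, b, _, hA, ha, hb, hab, hord⟩ := exists_three_group_pair_of_cube_root hR hω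
  let T := TriangleCover.ofPair ha hb (by rw [pow_mul (a * b) 3 3, hab, one_pow])
  have hprod : IsPGroup 3 (A × ClassThreeGroup) := by
    obtain ⟨m, hm⟩ := hA.exists_card_eq
    exact .of_card (n := m + 5) (by rw [Nat.card_prod, hm, ClassThreeGroup.natCard_eq, pow_add])
  obtain ⟨N, hN⟩ := (hprod.to_subgroup
    (closure {(a, ClassThreeGroup.X), (b, ClassThreeGroup.Y)})).exists_card_eq
  refine ⟨_, _, N, hN, ?_, ⟨T⟩⟩
  refine (Nat.pow_dvd_pow_iff_le_right (by norm_num : 1 < 3)).1 ?_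
  rw [← hN, CharP.eq R ‹CharP R (3 ^ k)› (CharP.addOrderOf_one R), ← hord]
  exact TriangleCover.orderOf_dvd_natCard_closure a b

lemma isBeauvilleOrder_three_pow {n : ℕ} (hn : 5 ≤ n) : IsBeauvilleOrder (3 ^ n) := by
  obtain ⟨G, _, N, hcard, hnN, ⟨T⟩⟩ := exists_triangleCover_natCard_eq_three_pow n
  exact T.isBeauvilleOrder_three_pow hcard hn hnN

theorem exists_beauville_p_group_of_order_general {m : ℕ} (hm : Odd m) (n : ℕ)
    (hn : (if 3 ∣ m then 5 else 2) ≤ n) : IsBeauvilleOrder (m ^ n) := by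
  have coprime_six {k : ℕ} (hk : Odd k) (hk3 : ¬ 3 ∣ k) : k.Coprime 6 :=
    Nat.Coprime.mul_right (Nat.coprime_two_right.2 hk)
      ((Nat.prime_three.coprime_iff_not_dvd.2 hk3).symm)
  split_ifs at hn with h3
  · obtain ⟨e, k, hk3, rfl⟩ := Nat.exists_eq_pow_mul_and_not_dvd hm.pos.ne' 3 (by norm_num)
    have he : e ≠ 0 := by rintro rfl; simp [hk3] at h3
    have hk := coprime_six (Nat.odd_mul.1 hm).2 hk3
    have hen : n ≤ e * n := Nat.le_mul_of_pos_left n (Nat.pos_of_ne_zero he)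
    rw [mul_pow, ← pow_mul]
    exact .mul (.pow _ _ (hk.coprime_dvd_right (by norm_num)).symm)
      (isBeauvilleOrder_three_pow (hn.trans hen))
      (isBeauvilleOrder_pow_of_coprime_six hk ((by norm_num : 2 ≤ 5).trans hn))
  · exact isBeauvilleOrder_pow_of_coprime_six (coprime_six hm h3) hn

theorem exists_beauville_p_group_of_order
    {p : ℕ} (hp : p.Prime) (hodd : Odd p) :
    ∀ n : ℕ, (if p = 3 then 5 else 2) ≤ n →
      ∃ (G : Type) (_ : Group G), Finite G ∧
        Nat.card G = p ^ n ∧ IsBeauvilleGroup G := by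
  intro n hn
  refine exists_beauville_p_group_of_order_general hodd n ?_
  simpa only [Nat.prime_dvd_prime_iff_eq Nat.prime_three hp, eq_comm] using hn
end
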